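/- arXiv:2101.07449 — 4 statements merged into one kernel-verified Lean document; each statement's English description precedes it below -/
import Mathlib

section
/- Let α = (1+√5)/2, let F_n denote the Fibonacci numbers, and for Re s > 1 define φ(s) = ∑_{m=1}^∞ ∑_{n=1}^∞ [ (i α^{-1})^{2m+n} F_{2m+n} + (i α^{-1})^{m+2n} F_{m+2n} ] / ( m^s (m+n)^s ), the double series converging absolutely there. Then there exists a function F : ℂ → ℂ that is meromorphic on all of ℂ, satisfies F(s) = φ(s) for all s with Re s > 1, is analytic at 0, and satisfies F(0) = (1/18)(6 − √5 + (2 − 3√5) i). -/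
/-!
Binet's formula turns the weight `(i/α)^N F_N` into `(i^N - y^N)/√5` with `y = -i α⁻²`, so that
`φ(s)` is a combination of four double series
`D(u, v; s) = ∑_{m,n ≥ 1} u^m v^n m^{-s} (m+n)^{-s}` with `{u, v} = {x, x²}`, `x = i` or `x = y`.
In every case `|u|, |v| ≤ 1` and `u, v ≠ 1`, and it is shown that each such `D` is entire in `s`
with `D(u, v; 0) = u/(1-u) · v/(1-v)`. In particular the continuation of `φ` is entire.

For `|v| ≤ 1`, `v ≠ 1`, summation by parts reads
`∑ v^n a(m+n) = (a(m) + v ∑ v^n (Δa)(m+n)) / (1-v)`.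
The right-hand side makes sense as soon as `Δa` is summable; iterating, a regularised sum `reg v a`
is obtained whenever some iterated difference `Δᵏa` is summable, independently of `k` (`reg_eq`).
On a disc `|s| < R` it is applied to *symbols of order `p`*: families `a n s`, holomorphic in `s`,
with `Δᵏa = O((n+1)^(p-k))` uniformly in `s` for all `k` (`Symb`). Symbols are stable under products
(`SymK.mul`) and under regularised summation (`Symb.reg`), and `(n+1)^(-s)` is a symbol (`symb_pw`).
Hence the inner regularised sum over `n`, multiplied by `m^{-s}`, is again a symbol in `m`, and the
outer regularised sum is holomorphic in `s` on every disc. At `s = 0` all symbols involved are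
constant sequences, whose regularised sums are geometric (`reg_const`).
-/

open Complex

/-- The golden ratio `(1+√5)/2`. -/
noncomputable def goldenAlpha : ℝ := (1 + Real.sqrt 5) / 2

/-- The term of the Fibonacci double Dirichlet series `φ(s)`. -/
noncomputable def fibPhiTerm (s : ℂ) (p : ℕ × ℕ) : ℂ :=
  ((Complex.I * (goldenAlpha : ℂ)⁻¹) ^ (2 * (p.1 + 1) + (p.2 + 1))
      * (Nat.fib (2 * (p.1 + 1) + (p.2 + 1)) : ℂ)
    + (Complex.I * (goldenAlpha : ℂ)⁻¹) ^ ((p.1 + 1) + 2 * (p.2 + 1))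
      * (Nat.fib ((p.1 + 1) + 2 * (p.2 + 1)) : ℂ))
  / (((p.1 + 1 : ℕ) : ℂ) ^ s * (((p.1 + 1) + (p.2 + 1) : ℕ) : ℂ) ^ s)

open Metric

/-! ### Regularised power-weighted sums -/

/-- The series `∑ₙ vⁿ a(m+n)` after `k` formal summations by parts; it is meaningful when the `k`-th
forward difference of `a` is summable. -/
noncomputable def regK (v : ℂ) : ℕ → (ℕ → ℂ) → ℕ → ℂ
  | 0, a, m => ∑' n, v ^ n * a (m + n)
  | k + 1, a, m => (a m + v * regK v k (fwdDiff 1 a) m) / (1 - v)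

lemma summable_weighted {v : ℂ} (hv : ‖v‖ ≤ 1) {a : ℕ → ℂ} (ha : Summable a) (m : ℕ) :
    Summable fun n => v ^ n * a (m + n) := by
  have h1 : Summable fun n => ‖a (m + n)‖ := by
    have := (summable_nat_add_iff m).2 ha.norm
    simpa [add_comm] using this
  refine Summable.of_norm_bounded h1 fun n => ?_
  rw [norm_mul, norm_pow]
  exact mul_le_of_le_one_left (norm_nonneg _) (pow_le_one₀ (norm_nonneg _) hv)

lemma summable_fwdDiff {a : ℕ → ℂ} (ha : Summable a) : Summable (fwdDiff 1 a) :=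
  ((summable_nat_add_iff 1).2 ha).sub ha

/-- One summation by parts does not change an absolutely convergent sum. -/
lemma regK_zero_eq_one {v : ℂ} (hv : ‖v‖ ≤ 1) (hv1 : v ≠ 1) {a : ℕ → ℂ} (ha : Summable a)
    (m : ℕ) : regK v 0 a m = regK v 1 a m := by
  have hne : 1 - v ≠ 0 := sub_ne_zero.2 hv1.symm
  have hS := summable_weighted hv ha m
  have hT := summable_weighted hv ha (m + 1)
  have e1 : ∑' n, v ^ n * a (m + n) = a m + v * ∑' n, v ^ n * a (m + 1 + n) := by
    rw [hS.tsum_eq_zero_add, ← tsum_mul_left]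
    congr 1
    · simp
    · refine tsum_congr fun n => ?_
      rw [pow_succ, show m + (n + 1) = m + 1 + n by ring]; ring
  have e2 : ∑' n, v ^ n * fwdDiff 1 a (m + n)
      = ∑' n, v ^ n * a (m + 1 + n) - ∑' n, v ^ n * a (m + n) := by
    rw [← hT.tsum_sub hS]
    refine tsum_congr fun n => ?_
    rw [fwdDiff, show m + n + 1 = m + 1 + n by ring]; ring
  simp only [regK]
  rw [e2, eq_div_iff hne]
  linear_combination e1

lemma regK_succ {v : ℂ} (hv : ‖v‖ ≤ 1) (hv1 : v ≠ 1) (k : ℕ) :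
    ∀ {a : ℕ → ℂ}, Summable ((fwdDiff 1)^[k] a) → ∀ m, regK v k a m = regK v (k + 1) a m := by
  induction k with
  | zero => intro a ha m; exact regK_zero_eq_one hv hv1 ha m
  | succ k ih =>
    intro a ha m
    rw [regK, regK, ih (by simpa using ha)]

lemma summable_iter_le {a : ℕ → ℂ} {k l : ℕ} (hkl : k ≤ l)
    (ha : Summable ((fwdDiff 1)^[k] a)) : Summable ((fwdDiff 1)^[l] a) := by
  induction l, hkl using Nat.le_induction with
  | base => exact ha
  | succ l _ ih => rw [Function.iterate_succ_apply']; exact summable_fwdDiff ih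

lemma regK_of_le {v : ℂ} (hv : ‖v‖ ≤ 1) (hv1 : v ≠ 1) {a : ℕ → ℂ} {k l : ℕ} (hkl : k ≤ l)
    (ha : Summable ((fwdDiff 1)^[k] a)) (m : ℕ) : regK v k a m = regK v l a m := by
  induction l, hkl using Nat.le_induction with
  | base => rfl
  | succ l h ih => rw [ih, regK_succ hv hv1 l (summable_iter_le h ha)]

open Classical in
/-- The regularised value of `∑ₙ vⁿ a(m+n)`: sum by parts until the differences of `a` are summable,
with value `0` if they never are. By `reg_eq` any admissible number of steps gives the same
value. -/
noncomputable def reg (v : ℂ) (a : ℕ → ℂ) (m : ℕ) : ℂ :=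
  if h : ∃ k, Summable ((fwdDiff 1)^[k] a) then regK v (Nat.find h) a m else 0

lemma reg_eq {v : ℂ} (hv : ‖v‖ ≤ 1) (hv1 : v ≠ 1) {a : ℕ → ℂ} {k : ℕ}
    (ha : Summable ((fwdDiff 1)^[k] a)) (m : ℕ) : reg v a m = regK v k a m := by
  classical
  have h : ∃ k, Summable ((fwdDiff 1)^[k] a) := ⟨k, ha⟩
  rw [reg, dif_pos h]
  exact regK_of_le hv hv1 (Nat.find_min' h ha) (Nat.find_spec h) m

lemma reg_of_summable {v : ℂ} (hv : ‖v‖ ≤ 1) (hv1 : v ≠ 1) {a : ℕ → ℂ} (ha : Summable a)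
    (m : ℕ) : reg v a m = ∑' n, v ^ n * a (m + n) :=
  reg_eq (k := 0) hv hv1 ha m

lemma reg_const {v : ℂ} (hv : ‖v‖ ≤ 1) (hv1 : v ≠ 1) (c : ℂ) (m : ℕ) :
    reg v (fun _ => c) m = c / (1 - v) := by
  have h : fwdDiff 1 (fun _ : ℕ => c) = fun _ => 0 := by ext; simp [fwdDiff]
  rw [reg_eq (k := 1) hv hv1 (by simp [h, summable_zero])]
  simp [regK, h]

/-! ### Symbols: sequences whose differences gain decay -/

/-- `a n` is holomorphic on the disc `|s| < R`, and `a n s = O((n+1)^p)` uniformly there. -/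
def Sym0 (R : ℝ) (p : ℤ) (a : ℕ → ℂ → ℂ) : Prop :=
  (∀ n, DifferentiableOn ℂ (a n) (ball 0 R)) ∧
    ∃ C : ℝ, ∀ n, ∀ s ∈ ball (0 : ℂ) R, ‖a n s‖ ≤ C * ((n : ℝ) + 1) ^ p

/-- `a` satisfies `Sym0` with order `p`, `Δa` with order `p - 1`, and so on up to the `K`-th
difference with order `p - K`. -/
def SymK (R : ℝ) : ℕ → ℤ → (ℕ → ℂ → ℂ) → Prop
  | 0, p, a => Sym0 R p a
  | K + 1, p, a => Sym0 R p a ∧ SymK R K (p - 1) (fwdDiff 1 a)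

/-- Symbols of order `p` on the disc `|s| < R`: every difference lowers the order by one. -/
def Symb (R : ℝ) (p : ℤ) (a : ℕ → ℂ → ℂ) : Prop := ∀ K, SymK R K p a

section

variable {R : ℝ}

lemma SymK.zero {K p} {a : ℕ → ℂ → ℂ} (h : SymK R K p a) : Sym0 R p a := by
  cases K with
  | zero => exact h
  | succ K => exact h.1

lemma SymK.pred {K : ℕ} : ∀ {p} {a : ℕ → ℂ → ℂ}, SymK R (K + 1) p a → SymK R K p a := by
  induction K with
  | zero => intro p a h; exact h.1
  | succ K ih => intro p a h; exact ⟨h.1, ih h.2⟩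

lemma Symb.diff {p} {a : ℕ → ℂ → ℂ} (h : Symb R p a) : Symb R (p - 1) (fwdDiff 1 a) :=
  fun K => (h (K + 1)).2

lemma Sym0.nonneg {p} {a : ℕ → ℂ → ℂ} (h : Sym0 R p a) :
    ∃ C : ℝ, 0 ≤ C ∧ ∀ n, ∀ s ∈ ball (0 : ℂ) R, ‖a n s‖ ≤ C * ((n : ℝ) + 1) ^ p := by
  obtain ⟨-, C, hC⟩ := h
  refine ⟨|C|, abs_nonneg C, fun n s hs => (hC n s hs).trans ?_⟩
  gcongr
  exact le_abs_self C

lemma Sym0.mono {p q : ℤ} (hpq : p ≤ q) {a : ℕ → ℂ → ℂ} (h : Sym0 R p a) : Sym0 R q a := by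
  obtain ⟨C, hC0, hC⟩ := h.nonneg
  refine ⟨h.1, C, fun n s hs => (hC n s hs).trans ?_⟩
  gcongr
  linarith [n.cast_nonneg (α := ℝ)]

lemma SymK.mono {K : ℕ} : ∀ {p q : ℤ}, p ≤ q → ∀ {a : ℕ → ℂ → ℂ}, SymK R K p a → SymK R K q a := by
  induction K with
  | zero => intro p q hpq a h; exact Sym0.mono hpq h
  | succ K ih => intro p q hpq a h; exact ⟨h.1.mono hpq, ih (by lia) h.2⟩

lemma SymK.add {K : ℕ} : ∀ {p : ℤ} {a b : ℕ → ℂ → ℂ}, SymK R K p a → SymK R K p b →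
    SymK R K p (a + b) := by
  have base : ∀ {p : ℤ} {a b : ℕ → ℂ → ℂ}, Sym0 R p a → Sym0 R p b → Sym0 R p (a + b) := by
    rintro p a b ⟨ha, C, hC⟩ ⟨hb, D, hD⟩
    refine ⟨fun n => (ha n).add (hb n), C + D, fun n s hs => ?_⟩
    rw [add_mul]
    exact (norm_add_le _ _).trans (add_le_add (hC n s hs) (hD n s hs))
  induction K with
  | zero => intro p a b ha hb; exact base ha hb
  | succ K ih =>
    intro p a b ha hb
    refine ⟨base ha.1 hb.1, ?_⟩
    rw [fwdDiff_add]
    exact ih ha.2 hb.2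

lemma zpow_le_of_le_two_mul {x y : ℝ} (hx : 0 < x) (hxy : x ≤ y) (hy : y ≤ 2 * x) (p : ℤ) :
    y ^ p ≤ 2 ^ |p| * x ^ p := by
  have hy0 : 0 < y := hx.trans_le hxy
  rcases le_total 0 p with hp | hp
  · rw [abs_of_nonneg hp, ← mul_zpow]
    exact zpow_le_zpow_left₀ hp hy0.le hy
  · have h1 : y ^ p ≤ x ^ p := by
      obtain ⟨k, rfl⟩ : ∃ k : ℕ, p = -(k : ℤ) := ⟨p.natAbs, by lia⟩
      rw [zpow_neg, zpow_neg, zpow_natCast, zpow_natCast]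
      gcongr
    have h2 : (1 : ℝ) ≤ 2 ^ |p| := one_le_zpow₀ (by norm_num) (abs_nonneg p)
    nlinarith [zpow_pos hx p]

lemma SymK.shift {K : ℕ} : ∀ {p : ℤ} {a : ℕ → ℂ → ℂ}, SymK R K p a →
    SymK R K p (fun n => a (n + 1)) := by
  have base : ∀ {p : ℤ} {a : ℕ → ℂ → ℂ}, Sym0 R p a → Sym0 R p (fun n => a (n + 1)) := by
    intro p a h
    obtain ⟨C, hC0, hC⟩ := h.nonneg
    refine ⟨fun n => h.1 _, C * 2 ^ |p|, fun n s hs => (hC _ s hs).trans ?_⟩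
    rw [mul_assoc]
    have hn := n.cast_nonneg (α := ℝ)
    gcongr
    apply zpow_le_of_le_two_mul <;> push_cast <;> linarith
  induction K with
  | zero => intro p a ha; exact base ha
  | succ K ih =>
    intro p a ha
    exact ⟨base ha.1, ih ha.2⟩

lemma SymK.mul {K : ℕ} : ∀ {p q : ℤ} {a b : ℕ → ℂ → ℂ}, SymK R K p a → SymK R K q b →
    SymK R K (p + q) (a * b) := by
  have base : ∀ {p q : ℤ} {a b : ℕ → ℂ → ℂ}, Sym0 R p a → Sym0 R q b →
      Sym0 R (p + q) (a * b) := by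
    intro p q a b ha hb
    obtain ⟨C, hC0, hC⟩ := ha.nonneg
    obtain ⟨D, hD0, hD⟩ := hb.nonneg
    refine ⟨fun n => (ha.1 n).mul (hb.1 n), C * D, fun n s hs => ?_⟩
    rw [zpow_add₀ (by positivity), Pi.mul_apply, Pi.mul_apply, norm_mul, mul_mul_mul_comm]
    exact mul_le_mul (hC n s hs) (hD n s hs) (norm_nonneg _) (by positivity)
  induction K with
  | zero => intro p q a b ha hb; exact base ha hb
  | succ K ih =>
    intro p q a b ha hb
    refine ⟨base ha.1 hb.1, ?_⟩
    -- Discrete Leibniz rule: each summand has one factor of order lowered by one.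
    have e : fwdDiff 1 (a * b) = fwdDiff 1 a * b + (fun n => a (n + 1)) * fwdDiff 1 b := by
      ext n s
      simp only [fwdDiff, Pi.mul_apply, Pi.add_apply, Pi.sub_apply]
      ring
    rw [e]
    refine SymK.add ?_ ?_
    · exact (ih ha.2 hb.pred).mono (by lia)
    · exact (ih ha.pred.shift hb.2).mono (by lia)

lemma SymK.const_mul {K : ℕ} (c : ℂ) : ∀ {p : ℤ} {a : ℕ → ℂ → ℂ}, SymK R K p a →
    SymK R K p (fun n s => c * a n s) := by
  have base : ∀ {p : ℤ} {a : ℕ → ℂ → ℂ}, Sym0 R p a → Sym0 R p (fun n s => c * a n s) := by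
    rintro p a ⟨ha, C, hC⟩
    refine ⟨fun n => (ha n).const_mul c, ‖c‖ * C, fun n s hs => ?_⟩
    rw [norm_mul, mul_assoc]
    gcongr
    exact hC n s hs
  induction K with
  | zero => intro p a ha; exact base ha
  | succ K ih =>
    intro p a ha
    refine ⟨base ha.1, ?_⟩
    have := ih ha.2
    convert this using 1
    ext n s
    simp only [fwdDiff, Pi.sub_apply]
    ring

lemma SymK.congr {K : ℕ} : ∀ {p : ℤ} {a b : ℕ → ℂ → ℂ},
    (∀ n, ∀ s ∈ ball (0 : ℂ) R, a n s = b n s) → SymK R K p b → SymK R K p a := by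
  have base : ∀ {p : ℤ} {a b : ℕ → ℂ → ℂ},
    (∀ n, ∀ s ∈ ball (0 : ℂ) R, a n s = b n s) → Sym0 R p b → Sym0 R p a := by
    rintro p a b h ⟨hb, C, hC⟩
    refine ⟨fun n => (hb n).congr (h n), C, fun n s hs => ?_⟩
    rw [h n s hs]; exact hC n s hs
  induction K with
  | zero => intro p a b h hb; exact base h hb
  | succ K ih =>
    intro p a b h hb
    refine ⟨base h hb.1, ih (fun n s hs => ?_) hb.2⟩
    simp only [fwdDiff, Pi.sub_apply, h _ s hs]

lemma summable_sq : Summable fun n : ℕ => (((n : ℝ) + 1) ^ 2)⁻¹ := by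
  have := (summable_nat_add_iff 1).2 (Real.summable_nat_pow_inv (p := 2).2 (by norm_num))
  simpa using this

lemma zpow_split {p : ℤ} (hp : p ≤ -2) (m n : ℕ) :
    (((m + n : ℕ) : ℝ) + 1) ^ p ≤ ((m : ℝ) + 1) ^ (p + 2) * (((n : ℝ) + 1) ^ 2)⁻¹ := by
  obtain ⟨k, rfl⟩ : ∃ k : ℕ, p = -((k + 2 : ℕ) : ℤ) := ⟨(p + 2).natAbs, by lia⟩
  rw [show -((k + 2 : ℕ) : ℤ) + 2 = -(k : ℤ) by push_cast; ring, zpow_neg, zpow_neg, zpow_natCast,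
    zpow_natCast, ← mul_inv, pow_add]
  have hn := n.cast_nonneg (α := ℝ)
  have hm := m.cast_nonneg (α := ℝ)
  push_cast
  gcongr <;> linarith

lemma Sym0.weighted_bound {p : ℤ} (hp : p ≤ -2) {v : ℂ} (hv : ‖v‖ ≤ 1) {a : ℕ → ℂ → ℂ}
    (ha : Sym0 R p a) : ∃ C : ℝ, 0 ≤ C ∧ ∀ m n, ∀ s ∈ ball (0 : ℂ) R,
      ‖v ^ n * a (m + n) s‖ ≤ C * ((m : ℝ) + 1) ^ (p + 2) * (((n : ℝ) + 1) ^ 2)⁻¹ := by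
  obtain ⟨C, hC0, hC⟩ := ha.nonneg
  refine ⟨C, hC0, fun m n s hs => ?_⟩
  rw [norm_mul, norm_pow]
  refine (mul_le_of_le_one_left (norm_nonneg _) (pow_le_one₀ (norm_nonneg _) hv)).trans
    ((hC _ s hs).trans ?_)
  rw [mul_assoc]
  gcongr
  exact zpow_split hp m n

lemma Sym0.summable {p : ℤ} (hp : p ≤ -2) {a : ℕ → ℂ → ℂ} (ha : Sym0 R p a) {s : ℂ}
    (hs : s ∈ ball (0 : ℂ) R) : Summable fun n => a n s := by
  obtain ⟨C, -, hC⟩ := ha.weighted_bound (v := 1) hp (by simp)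
  refine Summable.of_norm_bounded (summable_sq.mul_left C) fun n => ?_
  simpa using hC 0 n s hs

/-- An absolutely convergent weighted tail sum of a symbol of order `p ≤ -2` has order at most
`p + 2`. The loss of `2` comes from `(m+n+1)^p ≤ (m+1)^(p+2) (n+1)^(-2)`; it is not optimal, but
only finiteness of the order matters. -/
lemma Sym0.tsum {p : ℤ} (hp : p ≤ -2) {v : ℂ} (hv : ‖v‖ ≤ 1) {a : ℕ → ℂ → ℂ}
    (ha : Sym0 R p a) : Sym0 R (p + 2) (fun m s => ∑' n, v ^ n * a (m + n) s) := by
  obtain ⟨C, hC0, hC⟩ := ha.weighted_bound hp hv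
  refine ⟨fun m => ?_, C * ∑' n : ℕ, (((n : ℝ) + 1) ^ 2)⁻¹, fun m s hs => ?_⟩
  · exact Complex.differentiableOn_tsum_of_summable_norm (summable_sq.mul_left _)
      (fun n => (ha.1 _).const_mul _) isOpen_ball (fun n s hs => hC m n s hs)
  · have := tsum_of_norm_bounded (summable_sq.mul_left _).hasSum (fun n => hC m n s hs)
    rw [tsum_mul_left] at this
    linarith

lemma SymK.regK_zero {v : ℂ} (hv : ‖v‖ ≤ 1) {K : ℕ} : ∀ {p : ℤ} {a : ℕ → ℂ → ℂ}, p ≤ -2 →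
    SymK R K p a → SymK R K (p + 2) (fun m s => ∑' n, v ^ n * a (m + n) s) := by
  induction K with
  | zero => intro p a hp ha; exact Sym0.tsum hp hv ha
  | succ K ih =>
    intro p a hp ha
    refine ⟨Sym0.tsum hp hv ha.1, ?_⟩
    refine SymK.congr (b := fun m s => ∑' n, v ^ n * fwdDiff 1 a (m + n) s) ?_
      ((ih (by lia) ha.2).mono (by lia))
    intro m s hs
    have h := ha.1.summable hp hs
    simp only [fwdDiff, Pi.sub_apply]
    rw [← (summable_weighted hv h (m + 1)).tsum_sub (summable_weighted hv h m)]
    refine tsum_congr fun n => ?_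
    rw [show m + n + 1 = m + 1 + n by ring]; ring

lemma Symb.regK {v : ℂ} (hv : ‖v‖ ≤ 1) (k : ℕ) : ∀ {p : ℤ} {a : ℕ → ℂ → ℂ}, p - k ≤ -2 →
    Symb R p a → Symb R (p + 2) (fun m s => regK v k (fun n => a n s) m) := by
  induction k with
  | zero => intro p a hp ha K; exact (ha K).regK_zero hv (by simpa using hp)
  | succ k ih =>
    intro p a hp ha K
    have h1 := (ih (p := p - 1) (by push_cast at hp; lia) ha.diff K).mono (q := p + 2) (by lia)
    have h2 := ((ha K).mono (q := p + 2) (by lia)).add (h1.const_mul v)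
    refine (h2.const_mul (1 - v)⁻¹).congr fun m s _ => ?_
    simp only [_root_.regK, Pi.add_apply, div_eq_inv_mul]
    rfl

lemma Symb.summable_iter (k : ℕ) : ∀ {p : ℤ} {a : ℕ → ℂ → ℂ}, p - k ≤ -2 →
    Symb R p a → ∀ s ∈ ball (0 : ℂ) R, Summable ((fwdDiff 1)^[k] (fun n => a n s)) := by
  induction k with
  | zero => intro p a hp ha s hs; exact Sym0.summable (by simpa using hp) (ha 0) hs
  | succ k ih =>
    intro p a hp ha s hs
    exact ih (p := p - 1) (by push_cast at hp; lia) ha.diff s hs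

/-- Regularised summation maps symbols to symbols. On a fixed disc one number of summations by parts
serves all `s`. -/
lemma Symb.reg {v : ℂ} (hv : ‖v‖ ≤ 1) (hv1 : v ≠ 1) {p : ℤ} {a : ℕ → ℂ → ℂ}
    (ha : Symb R p a) : Symb R (p + 2) (fun m s => reg v (fun n => a n s) m) := by
  have hk : p - (p + 2).toNat ≤ -2 := by lia
  intro K
  refine SymK.congr (fun m s hs => ?_) (Symb.regK hv _ hk ha K)
  exact reg_eq hv hv1 (ha.summable_iter _ hk s hs) m

end

/-! ### The symbol `(n+1)^(-s)` -/

/-- The `k`-th forward difference of `x ↦ x ^ (-s)`. -/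
noncomputable def powDiff : ℕ → ℂ → ℝ → ℂ
  | 0, s, x => (x : ℂ) ^ (-s)
  | k + 1, s, x => powDiff k s (x + 1) - powDiff k s x

lemma powDiff_hasDerivAt (k : ℕ) : ∀ (s : ℂ) {x : ℝ}, 0 < x →
    HasDerivAt (powDiff k s) (-s * powDiff k (s + 1) x) x := by
  induction k with
  | zero =>
    intro s x hx
    have h := ((hasDerivAt_id (x : ℂ)).cpow_const (c := -s) (by simp [hx])).comp_ofReal
    have e : -s * powDiff 0 (s + 1) x = -s * id (x : ℂ) ^ (-s - 1) * 1 := by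
      simp only [powDiff, id, mul_one, neg_add, ← sub_eq_add_neg]
    rw [e]
    exact h
  | succ k ih =>
    intro s x hx
    have h1 := (ih s (x := x + 1) (by linarith)).comp_add_const x 1
    have e : -s * powDiff (k + 1) (s + 1) x
        = -s * powDiff k (s + 1) (x + 1) - -s * powDiff k (s + 1) x := by
      simp only [powDiff]; ring
    rw [e]
    exact h1.sub (ih s hx)

/-- The `k`-th difference of `x^(-s)` is `O(x^(p-k))` when `Re s ≥ -p`. Taking one more difference
costs, by the mean value inequality, the derivative of the previous one, which is `-s` times the
same difference at `s + 1`. -/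
lemma powDiff_bound (k : ℕ) : ∀ (R : ℝ) (p : ℤ), ∃ C : ℝ, 0 ≤ C ∧ ∀ s : ℂ, ‖s‖ ≤ R →
    -(p : ℝ) ≤ s.re → ∀ x : ℝ, 1 ≤ x → ‖powDiff k s x‖ ≤ C * x ^ (p - k) := by
  induction k with
  | zero =>
    refine fun R p => ⟨1, zero_le_one, fun s hs hsp x hx => ?_⟩
    rw [powDiff, Complex.norm_cpow_eq_rpow_re_of_pos (by linarith), one_mul, Nat.cast_zero,
      sub_zero, ← Real.rpow_intCast]
    exact Real.rpow_le_rpow_of_exponent_le hx (by simp; linarith)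
  | succ k ih =>
    intro R p
    obtain ⟨C, hC0, hC⟩ := ih (R + 1) (p - 1)
    refine ⟨|R| * (C * 2 ^ |p - 1 - k|), by positivity, fun s hs hsp x hx => ?_⟩
    have key := (convex_Icc x (x + 1)).norm_image_sub_le_of_norm_hasDerivWithin_le
      (f := powDiff k s) (f' := fun y => -s * powDiff k (s + 1) y)
      (C := |R| * (C * (2 ^ |p - 1 - k| * x ^ (p - 1 - k))))
      (fun y hy => (powDiff_hasDerivAt k s (by linarith [hy.1])).hasDerivWithinAt)
      (fun y hy => ?_) (x := x) (y := x + 1) (by simp) (by simp)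
    · rw [powDiff]
      refine key.trans (le_of_eq ?_)
      rw [show p - ((k + 1 : ℕ) : ℤ) = p - 1 - k by push_cast; ring]
      simp; ring
    · rw [norm_mul, norm_neg]
      have h1 : ‖powDiff k (s + 1) y‖ ≤ C * y ^ (p - 1 - k) := by
        refine hC (s + 1) ((norm_add_le _ _).trans (by simpa using hs)) ?_ y (by linarith [hy.1])
        push_cast; simp; linarith
      have h2 : y ^ (p - 1 - (k : ℤ)) ≤ 2 ^ |p - 1 - k| * x ^ (p - 1 - (k : ℤ)) :=
        zpow_le_of_le_two_mul (by linarith) hy.1 (by linarith [hy.2]) _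
      have h3 : ‖s‖ ≤ |R| := hs.trans (le_abs_self R)
      exact mul_le_mul h3 (h1.trans (by gcongr)) (norm_nonneg _) (abs_nonneg R)

lemma powDiff_differentiable (k : ℕ) : ∀ {x : ℝ}, 0 < x →
    Differentiable ℂ fun s => powDiff k s x := by
  induction k with
  | zero =>
    intro x hx
    have : (x : ℂ) ≠ 0 := by exact_mod_cast hx.ne'
    simp only [powDiff]
    exact fun s => (differentiableAt_id.neg).const_cpow (Or.inl this)
  | succ k ih =>
    intro x hx
    exact (ih (by linarith)).sub (ih hx)

/-- The symbol `(n+1)^(-s)`, with indices shifted to start at `0`. -/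
noncomputable def pw (n : ℕ) (s : ℂ) : ℂ := ((n + 1 : ℕ) : ℂ) ^ (-s)

lemma symb_pw (R : ℝ) : Symb R ⌈R⌉ pw := by
  have main : ∀ K k : ℕ, SymK R K (⌈R⌉ - k) (fun n s => powDiff k s ((n : ℝ) + 1)) := by
    have base : ∀ k : ℕ, Sym0 R (⌈R⌉ - k) (fun n s => powDiff k s ((n : ℝ) + 1)) := by
      intro k
      obtain ⟨C, -, hC⟩ := powDiff_bound k R ⌈R⌉
      refine ⟨fun n => (powDiff_differentiable k (by positivity)).differentiableOn, C,
        fun n s hs => ?_⟩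
      have hs' : ‖s‖ < R := by simpa using hs
      refine hC s hs'.le ?_ _ (by linarith [n.cast_nonneg (α := ℝ)])
      have := (abs_le.1 (Complex.abs_re_le_norm s)).1
      linarith [Int.le_ceil R]
    intro K
    induction K with
    | zero => exact base
    | succ K ih =>
      intro k
      refine ⟨base k, ((ih (k + 1)).mono (by push_cast; lia)).congr fun n s _ => ?_⟩
      simp [fwdDiff, powDiff]
  intro K
  refine (show SymK R K ⌈R⌉ _ by simpa using main K 0).congr fun n s _ => ?_
  simp [pw, powDiff]

/-! ### The double series with two geometric weights -/

/-- The iterated regularisation of `∑_{m,n ≥ 1} u^m v^n m^{-s} (m+n)^{-s}`. Indices start at `0`, which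
accounts for the prefactor `u * v` and for the shift in `pw (n + 1)`. -/
noncomputable def dbl (u v s : ℂ) : ℂ :=
  u * v * reg u (fun m => pw m s * reg v (fun n => pw (n + 1) s) m) 0

lemma dbl_differentiable {u v : ℂ} (hu : ‖u‖ ≤ 1) (hu1 : u ≠ 1) (hv : ‖v‖ ≤ 1) (hv1 : v ≠ 1) :
    Differentiable ℂ (dbl u v) := by
  intro s
  have hA : Symb (‖s‖ + 1) _ pw := symb_pw _
  have hA' : Symb (‖s‖ + 1) _ (fun n => pw (n + 1)) := fun K => (hA K).shift
  have hb := hA'.reg hv hv1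
  have hc : Symb (‖s‖ + 1) _ (pw * fun m s => reg v (fun n => pw (n + 1) s) m) :=
    fun K => (hA K).mul (hb K)
  have hd := (hc.reg hu hu1 0).zero.1 0
  exact (hd.differentiableAt (isOpen_ball.mem_nhds (by simp))).const_mul (u * v)

lemma dbl_zero {u v : ℂ} (hu : ‖u‖ ≤ 1) (hu1 : u ≠ 1) (hv : ‖v‖ ≤ 1) (hv1 : v ≠ 1) :
    dbl u v 0 = u / (1 - u) * (v / (1 - v)) := by
  simp only [dbl, pw, neg_zero, cpow_zero, reg_const hv hv1, reg_const hu hu1, one_mul]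
  field_simp

lemma norm_pw (n : ℕ) (s : ℂ) : ‖pw n s‖ = ((n + 1 : ℕ) : ℝ) ^ (-s.re) := by
  rw [pw, Complex.norm_natCast_cpow_of_pos (Nat.succ_pos n), neg_re]

lemma summable_pw {s : ℂ} (hs : 1 < s.re) : Summable fun n => pw n s := by
  refine Summable.of_norm ?_
  simp only [norm_pw]
  exact (summable_nat_add_iff 1).2 (Real.summable_nat_rpow.2 (by linarith))

lemma norm_pw_le {s : ℂ} (hs : 1 < s.re) {m n : ℕ} (h : m ≤ n) : ‖pw n s‖ ≤ ‖pw m s‖ := by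
  rw [norm_pw, norm_pw]
  exact Real.rpow_le_rpow_of_nonpos (by positivity) (by exact_mod_cast Nat.succ_le_succ h)
    (by linarith)

lemma dbl_hasSum {u v : ℂ} (hu : ‖u‖ ≤ 1) (hu1 : u ≠ 1) (hv : ‖v‖ ≤ 1) (hv1 : v ≠ 1) {s : ℂ}
    (hs : 1 < s.re) :
    HasSum (fun p : ℕ × ℕ => u ^ (p.1 + 1) * v ^ (p.2 + 1) * (pw p.1 s * pw (p.1 + p.2 + 1) s))
      (dbl u v s) := by
  have hP := summable_pw hs
  have hsum : Summable (fun p : ℕ × ℕ =>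
      u ^ (p.1 + 1) * v ^ (p.2 + 1) * (pw p.1 s * pw (p.1 + p.2 + 1) s)) := by
    refine Summable.of_norm_bounded (hP.norm.mul_of_nonneg hP.norm (fun _ => norm_nonneg _)
      (fun _ => norm_nonneg _)) fun p => ?_
    rw [norm_mul, norm_mul, norm_mul, norm_pow, norm_pow]
    have h1 := norm_pw_le hs (show p.2 ≤ p.1 + p.2 + 1 by lia)
    have h2 := pow_le_one₀ (n := p.1 + 1) (norm_nonneg _) hu
    have h3 := pow_le_one₀ (n := p.2 + 1) (norm_nonneg _) hv
    refine (mul_le_of_le_one_left (by positivity) (mul_le_one₀ h2 (by positivity) h3)).trans ?_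
    gcongr
  have hP' : Summable fun n => pw (n + 1) s := (summable_nat_add_iff 1).2 hP
  have hb : ∀ m, reg v (fun n => pw (n + 1) s) m = ∑' n, v ^ n * pw (m + n + 1) s :=
    fun m => reg_of_summable hv hv1 hP' m
  have hfib : ∀ m, ∑' n, u ^ (m + 1) * v ^ (n + 1) * (pw m s * pw (m + n + 1) s)
      = u * v * (u ^ m * (pw m s * reg v (fun n => pw (n + 1) s) m)) := by
    intro m
    rw [hb, ← tsum_mul_left, ← tsum_mul_left, ← tsum_mul_left]
    exact tsum_congr fun n => by ring
  have hc : Summable fun m => pw m s * reg v (fun n => pw (n + 1) s) m := by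
    refine Summable.of_norm_bounded (hP.norm.mul_right (∑' n, ‖pw n s‖)) fun m => ?_
    rw [norm_mul, hb]
    gcongr
    refine tsum_of_norm_bounded hP.norm.hasSum fun n => ?_
    rw [norm_mul, norm_pow]
    exact (mul_le_of_le_one_left (norm_nonneg _) (pow_le_one₀ (norm_nonneg _) hv)).trans
      (norm_pw_le hs (by lia))
  have : dbl u v s = ∑' p : ℕ × ℕ,
      u ^ (p.1 + 1) * v ^ (p.2 + 1) * (pw p.1 s * pw (p.1 + p.2 + 1) s) := by
    rw [hsum.tsum_prod, dbl, reg_of_summable hu hu1 hc, ← tsum_mul_left]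
    refine tsum_congr fun m => ?_
    rw [hfib, zero_add]
  rw [this]
  exact hsum.hasSum

/-! ### Binet's formula and the value at `0` -/

lemma goldenAlpha_eq : goldenAlpha = Real.goldenRatio := rfl

/-- Binet's formula for the weights: `(i/α)^N F_N = (i^N - y^N)/√5` with `y = -i α⁻²`. -/
lemma weight_fib (N : ℕ) : (I * (goldenAlpha : ℂ)⁻¹) ^ N * (Nat.fib N : ℂ)
    = (1 / (Real.sqrt 5 : ℂ)) * (I ^ N - (-I * (goldenAlpha : ℂ)⁻¹ ^ 2) ^ N) := by
  have hα : (Real.goldenRatio : ℂ) ≠ 0 := by exact_mod_cast Real.goldenRatio_ne_zero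
  have cast : ∀ f φ ψ r : ℝ, f = (φ ^ N - ψ ^ N) / r →
      (f : ℂ) = ((φ : ℂ) ^ N - (ψ : ℂ) ^ N) / r := by
    rintro _ φ ψ r rfl; push_cast; rfl
  have h := cast _ _ _ _ (congrFun Real.coe_fib_eq' N)
  have hψ : (Real.goldenConj : ℂ) = -(Real.goldenRatio : ℂ)⁻¹ := by
    have := Real.inv_goldenRatio
    rw [← Complex.ofReal_inv, this]; simp
  rw [ofReal_natCast] at h
  rw [h, hψ, goldenAlpha_eq]
  have e1 : I ^ N = (I * (Real.goldenRatio : ℂ)⁻¹) ^ N * (Real.goldenRatio : ℂ) ^ N := by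
    rw [← mul_pow]; congr 1; field_simp
  have e2 : (-I * (Real.goldenRatio : ℂ)⁻¹ ^ 2) ^ N
      = (I * (Real.goldenRatio : ℂ)⁻¹) ^ N * (-(Real.goldenRatio : ℂ)⁻¹) ^ N := by
    rw [← mul_pow]; congr 1; ring
  rw [e1, e2]; ring

/-- The evaluation of the four geometric products, with `r` in place of `√5`; note that
`α⁻² = (3 - √5)/2`. -/
lemma special_value (r y : ℂ) (hr : r ^ 2 = 5) (hy : y = -I * ((3 - r) / 2)) (h1 : 1 - y ≠ 0)
    (h2 : 1 - y ^ 2 ≠ 0) :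
    1 / r * (I ^ 2 / (1 - I ^ 2) * (I / (1 - I)) + I / (1 - I) * (I ^ 2 / (1 - I ^ 2))
      - (y ^ 2 / (1 - y ^ 2) * (y / (1 - y)) + y / (1 - y) * (y ^ 2 / (1 - y ^ 2))))
      = (1 / 18 : ℂ) * (6 - r + (2 - 3 * r) * I) := by
  have hI : (1 : ℂ) - I ≠ 0 := by
    intro h; have := congrArg Complex.im h; simp at this
  have hI2 : (1 : ℂ) - I ^ 2 ≠ 0 := by rw [I_sq]; norm_num
  have hr0 : r ≠ 0 := by rintro rfl; norm_num at hr
  have hII : I ^ 2 = -1 := I_sq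
  have a1 : I ^ 2 / (1 - I ^ 2) * (I / (1 - I)) = (1 - I) / 4 := by
    rw [I_sq]; field_simp; ring_nf; simp [I_sq]; ring
  have a2 : y ^ 2 / (1 - y ^ 2) * (y / (1 - y)) = (1 - I) / 4 - r / 36 * (6 - r + (2 - 3 * r) * I) := by
    rw [div_mul_div_comm, div_eq_iff (mul_ne_zero h2 h1)]
    have y2 : y ^ 2 = -((7 - 3 * r) / 2) := by
      rw [hy]; linear_combination (3 - r) ^ 2 / 4 * hII - 1 / 4 * hr
    have y3 : y ^ 2 * y = I * (9 - 4 * r) := by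
      rw [y2, hy]; linear_combination 3 * I / 4 * hr
    have e1 : (1 - I) / 4 - r / 36 * (6 - r + (2 - 3 * r) * I) = (7 - 3 * r + (3 - r) * I) / 18 := by
      linear_combination (1 + 3 * I) / 36 * hr
    have e2 : (7 - 3 * r + (3 - r) * I) / 18 * (1 - y ^ 2) = (18 - 8 * r + (7 - 3 * r) * I) / 6 := by
      rw [y2]; linear_combination (9 + 3 * I) / 36 * hr
    rw [y3, e1, ← mul_assoc, e2, hy]
    linear_combination (-(7 - 3 * r) * (3 - r) / 12) * hII - (-3 + 8 * I) / 12 * hr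
  rw [mul_comm (I / (1 - I)), mul_comm (y / (1 - y)), a1, a2]
  field_simp
  ring

/-- the Fibonacci double series `φ(s)` has a meromorphic continuation to `ℂ`
which is analytic at `0` with the stated special value. -/
theorem fibPhi_meromorphic_continuation_and_special_value :
    ∃ F : ℂ → ℂ, MeromorphicOn F Set.univ ∧
      (∀ s : ℂ, 1 < s.re → F s = ∑' p : ℕ × ℕ, fibPhiTerm s p) ∧
      AnalyticAt ℂ F 0 ∧
      F 0 = (1 / 18 : ℂ) *
        (6 - (Real.sqrt 5 : ℂ) + (2 - 3 * (Real.sqrt 5 : ℂ)) * Complex.I) := by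
  set y : ℂ := -I * (goldenAlpha : ℂ)⁻¹ ^ 2 with hy
  have hlt : ‖y‖ < 1 := by
    rw [hy, goldenAlpha_eq]
    simp only [norm_mul, norm_neg, norm_I, norm_pow, norm_inv, Complex.norm_real, one_mul]
    rw [Real.norm_of_nonneg Real.goldenRatio_pos.le]
    exact pow_lt_one₀ (inv_nonneg.2 Real.goldenRatio_pos.le)
      (inv_lt_one_of_one_lt₀ Real.one_lt_goldenRatio) two_ne_zero
  have hlt2 : ‖y ^ 2‖ < 1 := by
    rw [norm_pow]; exact pow_lt_one₀ (norm_nonneg _) hlt two_ne_zero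
  have ne1 : ∀ {z : ℂ}, ‖z‖ < 1 → z ≠ 1 := by rintro _ h rfl; simp at h
  have hI1 : I ≠ 1 := by intro h; have := congrArg Complex.im h; simp at this
  have hI2 : I ^ 2 ≠ 1 := by rw [I_sq]; norm_num
  have hIn : ‖I‖ ≤ 1 := by simp
  have hIn2 : ‖I ^ 2‖ ≤ 1 := by simp
  have hd : Differentiable ℂ fun s => 1 / (Real.sqrt 5 : ℂ) *
      (dbl (I ^ 2) I s + dbl I (I ^ 2) s - (dbl (y ^ 2) y s + dbl y (y ^ 2) s)) :=
    (((dbl_differentiable hIn2 hI2 hIn hI1).add (dbl_differentiable hIn hI1 hIn2 hI2)).sub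
      ((dbl_differentiable hlt2.le (ne1 hlt2) hlt.le (ne1 hlt)).add
        (dbl_differentiable hlt.le (ne1 hlt) hlt2.le (ne1 hlt2)))).const_mul _
  refine ⟨_, fun s _ => (hd.analyticAt s).meromorphicAt, fun s hs => ?_, hd.analyticAt 0, ?_⟩
  · have h := ((((dbl_hasSum hIn2 hI2 hIn hI1 hs).add (dbl_hasSum hIn hI1 hIn2 hI2 hs)).sub
      ((dbl_hasSum hlt2.le (ne1 hlt2) hlt.le (ne1 hlt) hs).add
        (dbl_hasSum hlt.le (ne1 hlt) hlt2.le (ne1 hlt2) hs))).mul_left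
          (1 / (Real.sqrt 5 : ℂ)))
    rw [← h.tsum_eq]
    refine tsum_congr fun p => ?_
    rw [fibPhiTerm, weight_fib, weight_fib, ← hy, div_eq_mul_inv _ (_ * _), mul_inv, ← cpow_neg,
      ← cpow_neg]
    simp only [pw, show p.1 + p.2 + 1 + 1 = p.1 + 1 + (p.2 + 1) by ring]
    simp only [← pow_mul, pow_add]
    ring
  · simp only [dbl_zero hIn2 hI2 hIn hI1, dbl_zero hIn hI1 hIn2 hI2,
      dbl_zero hlt2.le (ne1 hlt2) hlt.le (ne1 hlt), dbl_zero hlt.le (ne1 hlt) hlt2.le (ne1 hlt2)]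
    have hr : (Real.sqrt 5 : ℂ) ^ 2 = 5 := by
      rw [← ofReal_pow, Real.sq_sqrt (by norm_num)]; norm_num
    refine special_value _ y hr ?_ (sub_ne_zero.2 (ne1 hlt).symm) (sub_ne_zero.2 (ne1 hlt2).symm)
    have hα : (goldenAlpha : ℂ)⁻¹ = ((Real.sqrt 5 : ℂ) - 1) / 2 := by
      rw [goldenAlpha_eq, ← ofReal_inv, Real.inv_goldenRatio, Real.goldenConj]
      push_cast; ring
    rw [hy, hα]
    linear_combination (-I / 4) * hr
end

section
/- Let s, λ ∈ ℂ with Re s > 0, λ ≠ 0 and λ ∉ (−∞, 0] (i.e. |arg λ| < π for the principal argument), and let c ∈ ℝ with −Re s < c < 0. Then (1+λ)^{-s} = (1/(2π)) ∫_{−∞}^{∞} [ Γ(s + c + it) Γ(−c − it) / Γ(s) ] · exp( (c+it) · Log λ ) dt, where Γ is the Gamma function, Log is the principal branch of the logarithm, and (1+λ)^{-s} = exp(−s · Log(1+λ)) is the principal power; the integral converges absolutely. -/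
open MeasureTheory

/-!
The formula is Mellin inversion at `x = 1` for `x ↦ (a + b x)^(-s)`, where
`a = exp (-i arg λ / 2)` and `b = λ a`. Multiplying `1` and `λ` by the common factor `a` moves both
into the open right half-plane, which is possible exactly because `|arg λ| < π`; this treats all
admissible `λ` at once, with no analytic continuation in `λ`.

* `integral_laplace`: `∫ t^(z-1) exp (-r t) dt = r^(-z) Γ(z)` for complex `r` with `Re r > 0`.
* `hasMellin_add_mul_cpow`: writing `Γ(s) (a + b x)^(-s)` as a Laplace integral and exchanging the
  order of integration gives the Mellin transform
  `Γ(s - z) Γ(z) / Γ(s) * a^(z - s) b^(-z)`. With `z = -(c + it)` this is `a^(-s)` times the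
  Mellin–Barnes integrand.
* `norm_Gamma_le`: `Γ(σ + iy) = O(exp (-θ |y|))` for each `θ < π / 2`, read off from
  `integral_laplace` with `r = exp (± iθ)`. The two Gamma factors together decay faster than
  `exp (t * arg λ)` can grow, which gives absolute convergence and the integrability hypothesis of
  Mellin inversion.

Finally `(a + b)^(-s) = a^(-s) (1 + λ)^(-s)`, because `arg (1 + λ)` and `arg λ` have the same sign.
-/

open Set Complex Filter Topology

lemma norm_laplace_kernel (a r : ℂ) {t : ℝ} (ht : 0 < t) :
    ‖(t : ℂ) ^ (a - 1) * cexp (-(r * t))‖ = t ^ (a.re - 1) * Real.exp (-(r.re * t)) := by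
  rw [norm_mul, norm_cpow_eq_rpow_re_of_pos ht, norm_exp]
  simp

lemma integrableOn_rpow_mul_exp {p r : ℝ} (hp : 0 < p) (hr : 0 < r) :
    IntegrableOn (fun t : ℝ => t ^ (p - 1) * Real.exp (-(r * t))) (Ioi 0) := by
  have := integrableOn_rpow_mul_exp_neg_mul_rpow (p := 1) (s := p - 1) (b := r)
    (by linarith) one_pos hr
  simpa using this

lemma aestronglyMeasurable_laplace_kernel (a r : ℂ) :
    AEStronglyMeasurable (fun t : ℝ => (t : ℂ) ^ (a - 1) * cexp (-(r * t)))
      (volume.restrict (Ioi 0)) := by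
  have : Measurable (fun t : ℝ => (t : ℂ) ^ (a - 1) * cexp (-(r * t))) := by fun_prop
  exact this.aestronglyMeasurable

lemma integrableOn_laplace_kernel {a r : ℂ} (ha : 0 < a.re) (hr : 0 < r.re) :
    IntegrableOn (fun t : ℝ => (t : ℂ) ^ (a - 1) * cexp (-(r * t))) (Ioi 0) := by
  refine Integrable.mono' (integrableOn_rpow_mul_exp ha hr)
    (aestronglyMeasurable_laplace_kernel a r) ?_
  filter_upwards [ae_restrict_mem measurableSet_Ioi] with t ht
  exact (norm_laplace_kernel a r ht).le

/-- The bound for the derivative in `w` is uniform on the ball of radius `Re r / 2` around `r`, where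
`Re w > Re r / 2`. -/
lemma differentiableAt_laplace {a r : ℂ} (ha : 0 < a.re) (hr : 0 < r.re) :
    DifferentiableAt ℂ (fun r : ℂ => ∫ t in Ioi (0 : ℝ), (t : ℂ) ^ (a - 1) * cexp (-(r * t))) r := by
  have h2 : 0 < r.re / 2 := by positivity
  refine (hasDerivAt_integral_of_dominated_loc_of_deriv_le
    (F' := fun w t => (t : ℂ) ^ (a - 1) * (cexp (-(w * t)) * (-(1 * t))))
    (bound := fun t : ℝ => t ^ (a.re + 1 - 1) * Real.exp (-(r.re / 2 * t)))
    (Metric.ball_mem_nhds r h2) (Eventually.of_forall fun w =>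
      aestronglyMeasurable_laplace_kernel a w) (integrableOn_laplace_kernel ha hr) ?_ ?_
      (integrableOn_rpow_mul_exp (by linarith) h2) ?_).2.differentiableAt
  · refine Measurable.aestronglyMeasurable ?_
    fun_prop
  · filter_upwards [ae_restrict_mem measurableSet_Ioi] with t ht w hw
    have ht : 0 < t := ht
    rw [← mul_assoc, norm_mul, norm_laplace_kernel a w ht]
    have hwr : r.re / 2 < w.re := by
      have h1 := (Complex.abs_re_le_norm (w - r)).trans_lt (by simpa [dist_eq_norm] using hw)
      rw [sub_re, abs_lt] at h1
      linarith [h1.1]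
    have e : t ^ (a.re + 1 - 1) = t ^ (a.re - 1) * t := by
      rw [← Real.rpow_add_one ht.ne']; ring_nf
    have hn : ‖-(1 * (t : ℂ))‖ = t := by simp [ht.le]
    rw [hn, e, mul_right_comm]
    gcongr
  · refine Eventually.of_forall fun t w _ => ?_
    exact (((hasDerivAt_id w).mul_const (t : ℂ)).neg.cexp).const_mul _

/-- The Laplace transform of a power: the Gamma integral along a ray in the open right half-plane.
Both sides are holomorphic in `r` and agree on the positive real axis. -/
lemma integral_laplace {a r : ℂ} (ha : 0 < a.re) (hr : 0 < r.re) :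
    ∫ t in Ioi (0 : ℝ), (t : ℂ) ^ (a - 1) * cexp (-(r * t)) = r ^ (-a) * Gamma a := by
  have hopen : IsOpen {z : ℂ | 0 < z.re} := isOpen_lt continuous_const continuous_re
  have hconn : IsPreconnected {z : ℂ | 0 < z.re} := (convex_halfSpace_re_gt 0).isPreconnected
  have hf : AnalyticOnNhd ℂ (fun r : ℂ => ∫ t in Ioi (0 : ℝ), (t : ℂ) ^ (a - 1) * cexp (-(r * t)))
      {z : ℂ | 0 < z.re} :=
    DifferentiableOn.analyticOnNhd
      (fun z hz => (differentiableAt_laplace ha hz).differentiableWithinAt) hopen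
  have hg : AnalyticOnNhd ℂ (fun r : ℂ => r ^ (-a) * Gamma a) {z : ℂ | 0 < z.re} := by
    refine DifferentiableOn.analyticOnNhd (fun z hz => ?_) hopen
    have hz' : z ∈ slitPlane := Or.inl hz
    exact ((differentiableAt_id.cpow_const hz').mul_const _).differentiableWithinAt
  refine hf.eqOn_of_preconnected_of_frequently_eq hg hconn (z₀ := 1) (by simp) ?_ hr
  have hreal : ∀ x : ℝ, 0 < x → ∫ t in Ioi (0 : ℝ), (t : ℂ) ^ (a - 1) * cexp (-((x : ℂ) * t))
      = (x : ℂ) ^ (-a) * Gamma a := by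
    intro x hx
    rw [integral_cpow_mul_exp_neg_mul_Ioi ha hx, one_div, inv_cpow, cpow_neg]
    rw [arg_ofReal_of_nonneg hx.le]; exact Real.pi_pos.ne
  have ht : Tendsto (fun x : ℝ => (x : ℂ)) (𝓝[>] 1) (𝓝[≠] 1) := by
    refine tendsto_nhdsWithin_iff.2 ⟨?_, ?_⟩
    · exact (continuous_ofReal.tendsto' 1 1 (by simp)).mono_left nhdsWithin_le_nhds
    · filter_upwards [self_mem_nhdsWithin] with x hx
      have hx : 1 < x := hx
      simpa using hx.ne'
  refine ht.frequently (Eventually.frequently ?_)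
  filter_upwards [self_mem_nhdsWithin] with x hx
  exact hreal x (one_pos.trans hx)

/-- Exponential decay of `Γ` on vertical lines, at any rate `θ < π / 2` (for either sign of `θ`):
rotate the ray of integration in the Gamma integral by the angle `θ`. -/
lemma norm_Gamma_le {σ θ : ℝ} (hσ : 0 < σ) (hθ : |θ| < Real.pi / 2) :
    ∃ C, 0 ≤ C ∧ ∀ z : ℂ, z.re = σ → ‖Gamma z‖ ≤ C * Real.exp (-θ * z.im) := by
  obtain ⟨h1, h2⟩ := abs_lt.1 hθ
  refine ⟨∫ t in Ioi (0 : ℝ), t ^ (σ - 1) * Real.exp (-(Real.cos θ * t)),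
    setIntegral_nonneg measurableSet_Ioi fun t ht => ?_, fun z hz => ?_⟩
  · have ht : 0 < t := ht
    positivity
  have hre : (cexp (θ * I)).re = Real.cos θ := exp_ofReal_mul_I_re θ
  have hcos : 0 < (cexp (θ * I)).re := hre ▸ Real.cos_pos_of_mem_Ioo ⟨h1, h2⟩
  have hlog : Complex.log (cexp (θ * I)) = θ * I := by
    apply Complex.log_exp <;> simp <;> linarith [Real.pi_pos]
  have key := integral_laplace (a := z) (hz ▸ hσ) hcos
  have hn : ‖cexp (θ * I) ^ (-z)‖ = Real.exp (θ * z.im) := by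
    rw [cpow_def_of_ne_zero (exp_ne_zero _), hlog, norm_exp]
    simp
  have hle : Real.exp (θ * z.im) * ‖Gamma z‖
      ≤ ∫ t in Ioi (0 : ℝ), t ^ (σ - 1) * Real.exp (-(Real.cos θ * t)) := by
    rw [← hn, ← norm_mul, ← key]
    refine (norm_integral_le_integral_norm _).trans_eq ?_
    refine setIntegral_congr_fun measurableSet_Ioi fun t ht => ?_
    rw [norm_laplace_kernel z _ ht, hre, hz]
  rw [neg_mul, Real.exp_neg, ← div_eq_mul_inv, le_div_iff₀ (Real.exp_pos _), mul_comm]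
  exact hle


/-- No branch jump occurs, since a positive factor does not change the argument. -/
lemma mul_ofReal_cpow {b : ℂ} (hb : b ≠ 0) {u : ℝ} (hu : 0 < u) (w : ℂ) :
    (b * u) ^ w = b ^ w * (u : ℂ) ^ w := by
  have hu' : (u : ℂ) ≠ 0 := ofReal_ne_zero.2 hu.ne'
  rw [cpow_def_of_ne_zero (mul_ne_zero hb hu'), cpow_def_of_ne_zero hb, cpow_def_of_ne_zero hu',
    log_mul_ofReal u hu b hb, ← Complex.exp_add, ofReal_log hu.le]
  ring_nf

/-- The integrand of the double integral whose two iterated integrals both compute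
`Γ(s)` times the Mellin transform at `z` of `x ↦ (a + b x)^(-s)`. -/
noncomputable def doubleKernel (a b s z : ℂ) (x u : ℝ) : ℂ :=
  (x : ℂ) ^ (z - 1) * ((u : ℂ) ^ (s - 1) * cexp (-((a + b * x) * u)))

lemma doubleKernel_eq (a b s z : ℂ) (x u : ℝ) :
    doubleKernel a b s z x u = ((u : ℂ) ^ (s - 1) * cexp (-(a * u))) *
      ((x : ℂ) ^ (z - 1) * cexp (-((b * u) * x))) := by
  rw [doubleKernel, show -((a + b * x) * u) = -(a * u) + -((b * u) * x) by ring, Complex.exp_add]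
  ring

lemma integrable_doubleKernel {a b s z : ℂ} (ha : 0 < a.re) (hb : 0 < b.re) (hz : 0 < z.re)
    (hzs : z.re < s.re) :
    Integrable (Function.uncurry (doubleKernel a b s z))
      ((volume.restrict (Ioi 0)).prod (volume.restrict (Ioi 0))) := by
  have hmeas : Measurable (Function.uncurry (doubleKernel a b s z)) := by
    unfold doubleKernel Function.uncurry
    fun_prop
  have hbu : ∀ u : ℝ, 0 < u → 0 < (b * u).re := fun u hu => by
    rw [re_mul_ofReal]; positivity
  refine (integrable_prod_iff' hmeas.aestronglyMeasurable).2 ⟨?_, ?_⟩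
  · filter_upwards [ae_restrict_mem measurableSet_Ioi] with u hu
    simp only [Function.uncurry, doubleKernel_eq]
    exact (integrableOn_laplace_kernel hz (hbu u hu)).const_mul _
  · refine IntegrableOn.congr_fun (((integrableOn_rpow_mul_exp (p := s.re - z.re) (by linarith)
      ha).mul_const ((1 / b.re) ^ z.re * Real.Gamma z.re))) (fun u hu => ?_) measurableSet_Ioi
    have hu : 0 < u := hu
    have e1 : ∫ x in Ioi (0 : ℝ), ‖(x : ℂ) ^ (z - 1) * cexp (-((b * u) * x))‖
        = (1 / (b.re * u)) ^ z.re * Real.Gamma z.re := by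
      rw [← Real.integral_rpow_mul_exp_neg_mul_Ioi hz (by positivity)]
      refine setIntegral_congr_fun measurableSet_Ioi fun x hx => ?_
      rw [norm_laplace_kernel z _ hx, re_mul_ofReal]
    simp only [Function.uncurry, doubleKernel_eq]
    simp_rw [norm_mul ((u : ℂ) ^ (s - 1) * cexp (-(a * u)))]
    rw [integral_const_mul, e1, norm_laplace_kernel s a hu]
    rw [show s.re - z.re - 1 = (s.re - 1) + (-z.re) by ring, Real.rpow_add hu, ← div_div,
      Real.div_rpow (by positivity) hu.le, Real.rpow_neg hu.le]
    ring

/-- The Mellin transform of `x ↦ (a + b x)^(-s)`, for `a`, `b` in the open right half-plane. -/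
lemma hasMellin_add_mul_cpow {a b s z : ℂ} (ha : 0 < a.re) (hb : 0 < b.re) (hz : 0 < z.re)
    (hzs : z.re < s.re) :
    HasMellin (fun x : ℝ => (a + b * x) ^ (-s)) z
      (Gamma (s - z) * Gamma z / Gamma s * (a ^ (z - s) * b ^ (-z))) := by
  have hs : 0 < s.re := hz.trans hzs
  have hΓ : Gamma s ≠ 0 := Gamma_ne_zero_of_re_pos hs
  have hint := integrable_doubleKernel ha hb hz hzs
  have hb0 : b ≠ 0 := fun h => by simp [h] at hb
  have inner_u : ∀ x ∈ Ioi (0 : ℝ), ∫ u in Ioi (0 : ℝ), doubleKernel a b s z x u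
      = ((x : ℂ) ^ (z - 1) • (a + b * x) ^ (-s)) * Gamma s := fun x hx => by
    have hx : 0 < x := hx
    unfold doubleKernel
    rw [integral_const_mul, integral_laplace hs, smul_eq_mul, mul_assoc]
    rw [add_re, re_mul_ofReal]
    positivity
  have inner_x : ∀ u ∈ Ioi (0 : ℝ), ∫ x in Ioi (0 : ℝ), doubleKernel a b s z x u
      = ((u : ℂ) ^ (s - z - 1) * cexp (-(a * u))) * (b ^ (-z) * Gamma z) := fun u hu => by
    have hu : 0 < u := hu
    simp_rw [doubleKernel_eq]
    rw [integral_const_mul, integral_laplace hz, mul_ofReal_cpow hb0 hu,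
      show s - z - 1 = (s - 1) + -z by ring, cpow_add _ _ (ofReal_ne_zero.2 hu.ne')]
    · ring
    · rw [re_mul_ofReal]
      positivity
  have hconv : MellinConvergent (fun x : ℝ => (a + b * x) ^ (-s)) z := by
    have h := (IntegrableOn.congr_fun (s := Ioi 0) hint.integral_prod_left inner_u
      measurableSet_Ioi).mul_const (Gamma s)⁻¹
    simpa [MellinConvergent, hΓ, IntegrableOn] using h
  refine ⟨hconv, ?_⟩
  have hswap := integral_integral_swap hint
  rw [setIntegral_congr_fun measurableSet_Ioi inner_u,
    setIntegral_congr_fun measurableSet_Ioi inner_x, integral_mul_const, integral_mul_const,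
    integral_laplace (by simpa using hzs) ha] at hswap
  rw [mellin, eq_div_of_mul_eq hΓ hswap, neg_sub]
  ring

/-- The Mellin–Barnes integrand is `O(exp (-(2 θ + arg λ) t))`, uniformly in real `t`, for every
`|θ| < π / 2`. The Gamma factors have imaginary parts `Im s + t` and `-t`, so the decay bound is
used at rate `θ` for the first and `-θ` for the second. -/
lemma norm_integrand_le {s lam : ℂ} {c : ℝ} (hc₁ : -s.re < c) (hc₂ : c < 0) {θ : ℝ}
    (hθ : |θ| < Real.pi / 2) :
    ∃ C, ∀ t : ℝ, ‖Gamma (s + (c + t * I)) * Gamma (-(c + t * I))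
        / Gamma s * cexp ((c + t * I) * log lam)‖ ≤ C * Real.exp (-(2 * θ + arg lam) * t) := by
  obtain ⟨C₁, hC₁, h₁⟩ := norm_Gamma_le (σ := s.re + c) (θ := θ) (by linarith) hθ
  obtain ⟨C₂, hC₂, h₂⟩ := norm_Gamma_le (σ := -c) (θ := -θ) (by linarith) (by rwa [abs_neg])
  refine ⟨C₁ * C₂ / ‖Gamma s‖ * Real.exp (-θ * s.im + c * Real.log ‖lam‖), fun t => ?_⟩
  have e₁ := h₁ (s + (c + t * I)) (by simp)
  have e₂ := h₂ (-(c + t * I)) (by simp)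
  have e₃ : ‖cexp ((c + t * I) * log lam)‖ = Real.exp (c * Real.log ‖lam‖ - t * arg lam) := by
    rw [norm_exp]; simp [log_re, log_im]
  rw [norm_mul, norm_div, norm_mul, e₃]
  calc _ ≤ (C₁ * Real.exp (-θ * (s + (c + t * I)).im)) *
        (C₂ * Real.exp (- -θ * (-(c + t * I)).im)) / ‖Gamma s‖ *
          Real.exp (c * Real.log ‖lam‖ - t * arg lam) := by gcongr
    _ = C₁ * C₂ / ‖Gamma s‖ * (Real.exp (-θ * (s + (c + t * I)).im) *
        Real.exp (- -θ * (-(c + t * I)).im) * Real.exp (c * Real.log ‖lam‖ - t * arg lam)) := by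
      ring
    _ = _ := by
      rw [mul_assoc (C₁ * C₂ / ‖Gamma s‖), ← Real.exp_add, ← Real.exp_add, ← Real.exp_add]
      congr 2
      simp
      ring

lemma continuousAt_Gamma_of_re_pos {z : ℂ} (hz : 0 < z.re) : ContinuousAt Gamma z := by
  refine (differentiableAt_Gamma z fun m h => ?_).continuousAt
  have : z.re = -m := by simp [h]
  have := m.cast_nonneg (α := ℝ)
  linarith

lemma integrable_integrand {s lam : ℂ} {c : ℝ} (hc₁ : -s.re < c) (hc₂ : c < 0)
    (harg : |arg lam| < Real.pi) :
    Integrable (fun t : ℝ => Gamma (s + (c + t * I)) * Gamma (-(c + t * I))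
        / Gamma s * cexp ((c + t * I) * log lam)) := by
  have hcont : Continuous (fun t : ℝ => Gamma (s + (c + t * I)) * Gamma (-(c + t * I))
        / Gamma s * cexp ((c + t * I) * log lam)) := by
    refine Continuous.mul (Continuous.div_const (Continuous.mul ?_ ?_) _) (by fun_prop)
    · refine continuous_iff_continuousAt.2 fun t => ContinuousAt.comp'
        (continuousAt_Gamma_of_re_pos ?_) (by fun_prop)
      simp; linarith
    · refine continuous_iff_continuousAt.2 fun t => ContinuousAt.comp'
        (continuousAt_Gamma_of_re_pos ?_) (by fun_prop)
      simp; linarith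
  -- any `θ` with `|arg lam| < 2 θ < π` beats the growth of `exp (z * log lam)` in both directions
  obtain ⟨θ, h1, h2⟩ : ∃ θ, |arg lam| < 2 * θ ∧ θ < Real.pi / 2 :=
    ⟨(Real.pi + |arg lam|) / 4, by linarith, by linarith⟩
  obtain ⟨h3, h4⟩ := abs_lt.1 h1
  have hθ : |θ| < Real.pi / 2 := by rwa [abs_of_pos (by linarith [abs_nonneg (arg lam)])]
  obtain ⟨C, hC⟩ := norm_integrand_le (lam := lam) hc₁ hc₂ hθ
  obtain ⟨D, hD⟩ := norm_integrand_le (lam := lam) (θ := -θ) hc₁ hc₂ (by rwa [abs_neg])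
  rw [← integrableOn_univ, ← Iic_union_Ioi (a := (0 : ℝ))]
  refine IntegrableOn.union ?_ ?_
  · exact Integrable.mono' ((integrableOn_exp_mul_Iic (by linarith) 0).const_mul D)
      hcont.aestronglyMeasurable (Eventually.of_forall hD)
  · exact Integrable.mono' ((integrableOn_exp_mul_Ioi (by linarith) 0).const_mul C)
      hcont.aestronglyMeasurable (Eventually.of_forall hC)

/-- the classical Mellin–Barnes integral formula, with the vertical line
`Re z = c` parametrized as `z = c + it`. -/
theorem mellin_barnes_formula
    (s lam : ℂ) (hs : 0 < s.re)
    (hlam : ∀ x : ℝ, x ≤ 0 → (x : ℂ) ≠ lam)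
    (c : ℝ) (hc₁ : -s.re < c) (hc₂ : c < 0) :
    Integrable (fun t : ℝ =>
      Complex.Gamma (s + (c + t * Complex.I)) * Complex.Gamma (-(c + t * Complex.I))
        / Complex.Gamma s * Complex.exp ((c + t * Complex.I) * Complex.log lam)) ∧
    Complex.exp (-s * Complex.log (1 + lam))
      = (1 / (2 * Real.pi) : ℂ) * ∫ t : ℝ,
          Complex.Gamma (s + (c + t * Complex.I)) * Complex.Gamma (-(c + t * Complex.I))
            / Complex.Gamma s * Complex.exp ((c + t * Complex.I) * Complex.log lam) := by
  have hslit : lam ∈ slitPlane := by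
    by_contra h
    rw [mem_slitPlane_iff, not_or, not_lt, not_not] at h
    exact hlam lam.re h.1 (Complex.ext (by simp) (by simp [h.2]))
  have hlam0 : lam ≠ 0 := slitPlane_ne_zero hslit
  have harg : |arg lam| < Real.pi :=
    lt_of_le_of_ne (abs_arg_le_pi lam) fun h => by
      rcases eq_or_eq_neg_of_abs_eq h with h | h
      · exact slitPlane_arg_ne_pi hslit h
      · exact (neg_pi_lt_arg lam).ne' h
  obtain ⟨harg1, harg2⟩ := abs_lt.1 harg
  have hI := integrable_integrand (s := s) hc₁ hc₂ harg
  refine ⟨hI, ?_⟩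
  set g : ℝ → ℂ := fun t => Gamma (s + (c + t * I)) * Gamma (-(c + t * I))
        / Gamma s * cexp ((c + t * I) * log lam) with hg
  -- turning by half the argument of `lam` puts both `1` and `lam` into the right half-plane
  set L : ℂ := ((-(arg lam / 2) : ℝ) : ℂ) * I with hL
  have hLre : L.re = 0 := by simp [hL]
  have hLim : L.im = -(arg lam / 2) := by simp [hL]
  set a : ℂ := cexp L with ha_def
  set b : ℂ := lam * a with hb_def
  have hloga : log a = L := by
    apply Complex.log_exp <;> rw [hLim] <;> linarith
  have hb_exp : b = cexp (log lam + L) := by rw [Complex.exp_add, exp_log hlam0]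
  have hlogb : log b = log lam + L := by
    rw [hb_exp]
    apply Complex.log_exp <;> rw [add_im, log_im, hLim] <;> linarith
  have ha : 0 < a.re := by
    rw [ha_def, exp_re, hLim]
    exact mul_pos (Real.exp_pos _) (Real.cos_pos_of_mem_Ioo ⟨by linarith, by linarith⟩)
  have hb : 0 < b.re := by
    rw [hb_exp, exp_re, add_im, log_im, hLim]
    exact mul_pos (Real.exp_pos _) (Real.cos_pos_of_mem_Ioo ⟨by linarith, by linarith⟩)
  have ha0 : a ≠ 0 := exp_ne_zero _
  have hb0 : b ≠ 0 := mul_ne_zero hlam0 ha0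
  have hab : 0 < (a + b).re := by rw [add_re]; positivity
  have hab0 : a + b ≠ 0 := fun h => by simp [h] at hab
  have hab_eq : a + b = (1 + lam) * a := by rw [hb_def]; ring
  have h1lam : 1 + lam ≠ 0 := left_ne_zero_of_mul (hab_eq ▸ hab0)
  -- `arg (1 + lam)` and `arg lam` have the same sign, so the logarithms add without a jump
  have hlogab : log (a + b) = log (1 + lam) + L := by
    have him : (1 + lam).im = lam.im := by simp
    have hle := arg_le_pi (1 + lam)
    have hgt := neg_pi_lt_arg (1 + lam)
    rw [hab_eq, show (1 + lam) * a = cexp (log (1 + lam) + L) by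
      rw [Complex.exp_add, exp_log h1lam]]
    rcases le_or_gt 0 lam.im with h | h
    · have p1 := arg_nonneg_iff.2 h
      have p2 := arg_nonneg_iff.2 (him ▸ h : 0 ≤ (1 + lam).im)
      apply Complex.log_exp <;> rw [add_im, log_im, hLim] <;> linarith
    · have p1 := arg_neg_iff.2 h
      have p2 := arg_neg_iff.2 (him ▸ h : (1 + lam).im < 0)
      apply Complex.log_exp <;> rw [add_im, log_im, hLim] <;> linarith
  have hmellin : ∀ y : ℝ, HasMellin (fun x : ℝ => (a + b * x) ^ (-s)) (((-c : ℝ) : ℂ) + y * I)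
      (cexp (-s * L) * g (-y)) := fun y => by
    convert hasMellin_add_mul_cpow (s := s) (z := ((-c : ℝ) : ℂ) + y * I) ha hb
      (by simpa using hc₂) (by simp; linarith) using 1
    rw [cpow_def_of_ne_zero ha0, cpow_def_of_ne_zero hb0, hloga, hlogb, ← Complex.exp_add, hg]
    simp only [ofReal_neg]
    rw [show s + (c + -(y : ℂ) * I) = s - (-c + y * I) by ring,
      show -(c + -(y : ℂ) * I) = -c + y * I by ring, mul_left_comm, ← Complex.exp_add]
    congr 2
    ring
  have hinv := mellinInv_mellin_eq (-c) (fun x : ℝ => (a + b * x) ^ (-s)) one_pos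
    (by simpa using (hmellin 0).1)
    (by
      simp only [VerticalIntegrable, (hmellin _).2]
      exact hI.comp_neg.const_mul _)
    (by
      refine ContinuousAt.cpow (by fun_prop) (by fun_prop) (Or.inl ?_)
      simpa using hab)
  simp only [mellinInv, (hmellin _).2, ofReal_one, one_cpow, one_smul, mul_one] at hinv
  rw [integral_const_mul, integral_neg_eq_self g, cpow_def_of_ne_zero hab0, hlogab, add_mul,
    Complex.exp_add, real_smul] at hinv
  push_cast at hinv
  have hE : cexp (-s * L) ≠ 0 := exp_ne_zero _
  apply mul_left_cancel₀ hE
  rw [mul_comm L, mul_comm (log _)] at hinv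
  linear_combination -hinv
end

section
/- Let Λ denote the von Mangoldt function and F_2(s) = ∑_{k=1}^∞ ∑_{l=1}^∞ Λ(k) Λ(l) (k+l)^{-s}, which converges absolutely for Re s > 2. Then for every s ∈ ℂ with Re s > 2 and every c ∈ ℝ with 1 − Re s < c < −1, F_2(s) = (1/(2π)) ∫_{−∞}^{∞} [ Γ(s + c + it) Γ(−c − it) / Γ(s) ] · (ζ'/ζ)(s + c + it) · (ζ'/ζ)(−c − it) dt, where ζ is the Riemann zeta function; the integral converges absolutely. -/
/-!
Put `w = -z`. The weight `Γ(s - w)Γ(w)/Γ(s)` is the beta function `B(w, s - w)`, that is, the Mellin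
transform of `x ↦ (1 + x)^{-s}` (`mellin_one_add`, by the substitution `x = u / (1 - u)`). Mellin
inversion at `x = l / k` therefore writes `(k + l)^{-s}` as the integral of this weight against
`k^{-(s - w)} l^{-w}` (`mellin_barnes_add`). The integrability it needs comes without Stirling's
formula: `Γ(w) = Γ(w + 2) / (w (w + 1))` and `B(w + 2, s - w)` is bounded on vertical lines
(`integrable_gamma_quotient`).

Since `Re w > 1` and `Re (s - w) > 1`, the Dirichlet series of `-ζ'/ζ` converge absolutely at both
points, with bounds uniform along the line. Multiplying by `Λ(k)Λ(l)`, summing, and exchanging sum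
and integral gives the formula; the two minus signs cancel.
-/

open MeasureTheory ArithmeticFunction

/-- The logarithmic derivative `ζ'/ζ` of the Riemann zeta function. -/
noncomputable def zetaLogDeriv (w : ℂ) : ℂ := deriv riemannZeta w / riemannZeta w

/-! ### Decay of the beta function on vertical lines -/

open Complex in
lemma norm_betaIntegral_le (u v : ℂ) :
    ‖betaIntegral u v‖ ≤ ∫ x in (0:ℝ)..1, x ^ (u.re - 1) * (1 - x) ^ (v.re - 1) := by
  rw [betaIntegral, intervalIntegral.integral_of_le zero_le_one,
    intervalIntegral.integral_of_le zero_le_one, integral_Ioc_eq_integral_Ioo,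
    integral_Ioc_eq_integral_Ioo]
  refine (norm_integral_le_integral_norm _).trans_eq ?_
  refine setIntegral_congr_fun measurableSet_Ioo fun x hx => ?_
  have h1 : (0 : ℝ) < 1 - x := by linarith [hx.2]
  simp only [norm_mul]
  rw [norm_cpow_eq_rpow_re_of_pos hx.1, show (1 : ℂ) - x = ((1 - x : ℝ) : ℂ) by push_cast; rfl,
    norm_cpow_eq_rpow_re_of_pos h1]
  simp

/-- On a vertical line inside the strip `0 < Re w < Re s` the quotient `Γ(s - w)Γ(w)/Γ(s)` decays
quadratically: shifting `w` to `w + 2` by the functional equation of `Γ` leaves a beta integral,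
whose absolute value is at most the same integral with `w` and `s` replaced by their real parts. -/
lemma integrable_gamma_quotient (s : ℂ) {σ : ℝ} (h0 : 0 < σ) (hσ : σ < s.re) :
    Integrable (fun t : ℝ => Complex.Gamma (s - (σ + t * Complex.I)) *
      Complex.Gamma (σ + t * Complex.I) / Complex.Gamma s) := by
  have hs0 : Complex.Gamma s ≠ 0 := Complex.Gamma_ne_zero_of_re_pos (h0.trans hσ)
  set K : ℝ := ∫ x in (0:ℝ)..1, x ^ (σ + 2 - 1) * (1 - x) ^ (s.re - σ - 1)
  set C : ℝ := K * ‖Complex.Gamma (s + 2)‖ / ‖Complex.Gamma s‖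
  have hcont : Continuous (fun t : ℝ => Complex.Gamma (s - (σ + t * Complex.I)) *
      Complex.Gamma (σ + t * Complex.I) / Complex.Gamma s) := by
    have key : ∀ g : ℝ → ℂ, Continuous g → (∀ t, 0 < (g t).re) →
        Continuous fun t => Complex.Gamma (g t) := by
      intro g hg hp
      refine continuous_iff_continuousAt.2 fun t => ?_
      refine ContinuousAt.comp (Complex.differentiableAt_Gamma _ fun m h => ?_).continuousAt
        hg.continuousAt
      have := hp t
      rw [h] at this
      simp at this
      linarith [(Nat.cast_nonneg m : (0:ℝ) ≤ m)]
    refine Continuous.div_const (Continuous.mul (key _ (by fun_prop) ?_) (key _ (by fun_prop) ?_)) _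
    · intro t; simp; linarith
    · intro t; simp; linarith
  have hlin : Integrable (fun t : ℝ => C * (1 / (σ ^ 2)) * (1 + (σ⁻¹ * t) ^ 2)⁻¹) :=
    ((integrable_inv_one_add_sq).comp_mul_left' (inv_ne_zero h0.ne')).const_mul _
  refine hlin.mono' hcont.aestronglyMeasurable (Filter.Eventually.of_forall fun t => ?_)
  set w : ℂ := σ + t * Complex.I with hw
  have hwre : w.re = σ := by simp [hw]
  have hwim : w.im = t := by simp [hw]
  have hw0 : w ≠ 0 := fun h => by rw [h] at hwre; simp at hwre; linarith
  have hw1 : w + 1 ≠ 0 := fun h => by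
    have := congrArg Complex.re h
    simp [hwre] at this
    linarith
  have hrec : Complex.Gamma (w + 2) = (w + 1) * (w * Complex.Gamma w) := by
    rw [← Complex.Gamma_add_one w hw0, ← Complex.Gamma_add_one _ hw1]
    ring_nf
  have hbeta := Complex.Gamma_mul_Gamma_eq_betaIntegral (s := w + 2) (t := s - w)
    (by simp [hwre]; linarith) (by simp [hwre]; linarith)
  rw [show w + 2 + (s - w) = s + 2 by ring, hrec] at hbeta
  have hnorm : ‖Complex.Gamma (s - w) * Complex.Gamma w / Complex.Gamma s‖ * (‖w + 1‖ * ‖w‖)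
      ≤ C := by
    have h1 := norm_betaIntegral_le (w + 2) (s - w)
    have h2 : (w + 2).re = σ + 2 := by simp [hwre]
    have h3 : (s - w).re = s.re - σ := by simp [hwre]
    rw [h2, h3] at h1
    have h4 : ‖Complex.Gamma (s - w) * Complex.Gamma w / Complex.Gamma s‖ * (‖w + 1‖ * ‖w‖)
        = ‖Complex.betaIntegral (w + 2) (s - w)‖ * ‖Complex.Gamma (s + 2)‖ / ‖Complex.Gamma s‖ := by
      have h5 := congrArg norm hbeta
      simp only [norm_mul] at h5
      rw [mul_comm ‖Complex.betaIntegral _ _‖, ← h5]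
      simp only [norm_mul, norm_div]
      ring
    rw [h4]
    exact div_le_div_of_nonneg_right (mul_le_mul_of_nonneg_right h1 (norm_nonneg _)) (norm_nonneg _)
  have hsq : σ ^ 2 * (1 + (σ⁻¹ * t) ^ 2) = ‖w‖ * ‖w‖ := by
    rw [← sq, ← Complex.normSq_eq_norm_sq, Complex.normSq_apply, hwre, hwim]
    field_simp
  have hle : ‖w‖ ≤ ‖w + 1‖ := by
    refine le_of_sq_le_sq ?_ (norm_nonneg _)
    rw [← Complex.normSq_eq_norm_sq, ← Complex.normSq_eq_norm_sq, Complex.normSq_apply,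
      Complex.normSq_apply]
    simp [hwre, hwim]
    nlinarith
  have hwpos : 0 < ‖w‖ := norm_pos_iff.2 hw0
  have h5 : ‖Complex.Gamma (s - w) * Complex.Gamma w / Complex.Gamma s‖ * (‖w‖ * ‖w‖) ≤ C :=
    le_trans (by gcongr) hnorm
  rw [show C * (1 / σ ^ 2) * (1 + (σ⁻¹ * t) ^ 2)⁻¹ = C / (σ ^ 2 * (1 + (σ⁻¹ * t) ^ 2)) by
    simp only [div_eq_mul_inv, mul_inv]; ring, hsq]
  rwa [le_div_iff₀ (by positivity)]

/-! ### The Mellin transform of `(1 + x)^{-s}` and its inversion -/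

lemma image_div_one_sub_Ioo : (fun u : ℝ => u / (1 - u)) '' Set.Ioo 0 1 = Set.Ioi 0 := by
  ext y
  constructor
  · rintro ⟨u, hu, rfl⟩
    exact div_pos hu.1 (by linarith [hu.2])
  · intro hy
    have hy : 0 < y := hy
    refine ⟨y / (1 + y), ⟨by positivity, ?_⟩, ?_⟩
    · rw [div_lt_one (by positivity)]; linarith
    · have : 1 - y / (1 + y) = 1 / (1 + y) := by field_simp; ring
      simp only [this]
      field_simp

lemma injOn_div_one_sub_Ioo : Set.InjOn (fun u : ℝ => u / (1 - u)) (Set.Ioo 0 1) := by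
  intro u hu v hv h
  have h1 : (1 : ℝ) - u ≠ 0 := by linarith [hu.2]
  have h2 : (1 : ℝ) - v ≠ 0 := by linarith [hv.2]
  simp only at h
  rw [div_eq_div_iff h1 h2] at h
  linarith

/-- The substitution `x = u / (1 - u)` turns the Mellin integrand of `(1 + x)^{-s}` into the
integrand of `B(w, s - w)`. -/
lemma mellin_integrand_subst (s w : ℂ) {u : ℝ} (hu : u ∈ Set.Ioo (0 : ℝ) 1) :
    |((1 - u) ^ 2)⁻¹| • (((u / (1 - u) : ℝ) : ℂ) ^ (w - 1) •
      (((1 + u / (1 - u) : ℝ) : ℂ) ^ (-s))) = (u : ℂ) ^ (w - 1) * (1 - (u : ℂ)) ^ (s - w - 1) := by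
  have hv : (0 : ℝ) < 1 - u := by linarith [hu.2]
  have hv' : ((1 - u : ℝ) : ℂ) ≠ 0 := by exact_mod_cast hv.ne'
  have h1 : 1 + u / (1 - u) = (1 - u)⁻¹ := by field_simp; ring
  rw [h1, abs_of_pos (by positivity), div_eq_mul_inv, Complex.ofReal_mul,
    Complex.mul_cpow_ofReal_nonneg hu.1.le (by positivity)]
  have hinv : ∀ z : ℂ, (((1 - u)⁻¹ : ℝ) : ℂ) ^ z = ((1 - u : ℝ) : ℂ) ^ (-z) := by
    intro z
    rw [Complex.ofReal_inv, Complex.inv_cpow _ _ (by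
      rw [Complex.arg_ofReal_of_nonneg hv.le]; exact Real.pi_pos.ne), Complex.cpow_neg]
  have h2 : (((((1 - u) ^ 2)⁻¹ : ℝ)) : ℂ) = ((1 - u : ℝ) : ℂ) ^ (-2 : ℂ) := by
    rw [Complex.cpow_neg]
    norm_cast
  rw [hinv, hinv, Complex.real_smul, h2, smul_eq_mul,
    show (1 : ℂ) - u = ((1 - u : ℝ) : ℂ) by push_cast; rfl,
    show s - w - 1 = -2 + (-(w - 1) + - -s) by ring, Complex.cpow_add _ _ hv',
    Complex.cpow_add _ _ hv']
  ring

lemma hasDerivWithinAt_div_one_sub {u : ℝ} (hu : u ∈ Set.Ioo (0 : ℝ) 1) :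
    HasDerivWithinAt (fun u : ℝ => u / (1 - u)) (((1 - u) ^ 2)⁻¹) (Set.Ioo 0 1) u := by
  have hv : (1 : ℝ) - u ≠ 0 := by linarith [hu.2]
  have h := (hasDerivAt_id u).div ((hasDerivAt_id u).const_sub 1) hv
  refine (h.congr_deriv ?_).hasDerivWithinAt
  simp only [id]
  field_simp
  ring

lemma mellinConvergent_one_add (s w : ℂ) (h0 : 0 < w.re) (hw : w.re < s.re) :
    MellinConvergent (fun x : ℝ => ((1 + x : ℝ) : ℂ) ^ (-s)) w := by
  rw [MellinConvergent, ← image_div_one_sub_Ioo,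
    integrableOn_image_iff_integrableOn_abs_deriv_smul measurableSet_Ioo
      (fun u hu => hasDerivWithinAt_div_one_sub hu) injOn_div_one_sub_Ioo]
  have h := Complex.betaIntegral_convergent (u := w) (v := s - w) h0 (by simp; linarith)
  rw [intervalIntegrable_iff_integrableOn_Ioo_of_le zero_le_one] at h
  exact h.congr_fun (fun u hu => (mellin_integrand_subst s w hu).symm) measurableSet_Ioo

lemma mellin_one_add (s w : ℂ) (h0 : 0 < w.re) (hw : w.re < s.re) :
    mellin (fun x : ℝ => ((1 + x : ℝ) : ℂ) ^ (-s)) w =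
      Complex.Gamma (s - w) * Complex.Gamma w / Complex.Gamma s := by
  have hs0 : Complex.Gamma s ≠ 0 := Complex.Gamma_ne_zero_of_re_pos (h0.trans hw)
  have hb := Complex.Gamma_mul_Gamma_eq_betaIntegral (s := w) (t := s - w) h0 (by simp; linarith)
  rw [show w + (s - w) = s by ring] at hb
  rw [mul_comm (Complex.Gamma (s - w)), hb, mul_div_cancel_left₀ _ hs0, mellin,
    ← image_div_one_sub_Ioo, integral_image_eq_integral_abs_deriv_smul measurableSet_Ioo
      (fun u hu => hasDerivWithinAt_div_one_sub hu) injOn_div_one_sub_Ioo, Complex.betaIntegral,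
    intervalIntegral.integral_of_le zero_le_one, integral_Ioc_eq_integral_Ioo]
  exact setIntegral_congr_fun measurableSet_Ioo fun u hu => mellin_integrand_subst s w hu

/-- The Mellin–Barnes formula for `(k + l)^{-s}`, which is Mellin inversion for `(1 + x)^{-s}` at
`x = l / k`. -/
lemma mellin_barnes_add (s : ℂ) {σ : ℝ} (h0 : 0 < σ) (hσ : σ < s.re) {k l : ℝ} (hk : 0 < k)
    (hl : 0 < l) :
    (1 / (2 * Real.pi) : ℂ) * ∫ t : ℝ, Complex.Gamma (s - (σ + t * Complex.I)) *
      Complex.Gamma (σ + t * Complex.I) / Complex.Gamma s *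
        ((k : ℂ) ^ (-(s - (σ + t * Complex.I))) * (l : ℂ) ^ (-(σ + t * Complex.I)))
      = ((k + l : ℝ) : ℂ) ^ (-s) := by
  have hre : ∀ t : ℝ, ((σ : ℂ) + t * Complex.I).re = σ := by simp
  have hm : ∀ t : ℝ, mellin (fun x : ℝ => ((1 + x : ℝ) : ℂ) ^ (-s)) (σ + t * Complex.I) =
      Complex.Gamma (s - (σ + t * Complex.I)) *
      Complex.Gamma (σ + t * Complex.I) / Complex.Gamma s := fun t =>
    mellin_one_add _ _ (by rwa [hre]) (by rwa [hre])
  have hx : 0 < l / k := div_pos hl hk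
  have hinv := mellinInv_mellin_eq σ (fun x : ℝ => ((1 + x : ℝ) : ℂ) ^ (-s)) hx
    (mellinConvergent_one_add _ _ (by simpa) (by simpa))
    (by
      have := integrable_gamma_quotient s h0 hσ
      simp_rw [← hm] at this
      exact this)
    (by
      refine ContinuousAt.cpow (by fun_prop) continuousAt_const ?_
      exact Complex.ofReal_mem_slitPlane.2 (by positivity))
  have hk' : (k : ℂ) ≠ 0 := by exact_mod_cast hk.ne'
  have hkl : k + l = k * (1 + l / k) := by field_simp
  rw [hkl, Complex.ofReal_mul, Complex.mul_cpow_ofReal_nonneg hk.le (by positivity), ← hinv,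
    mellinInv]
  simp_rw [hm]
  rw [Complex.real_smul, mul_left_comm, show ((1 / (2 * Real.pi) : ℝ) : ℂ) = 1 / (2 * Real.pi) by push_cast; rfl]
  congr 1
  rw [← integral_const_mul]
  refine integral_congr_ae (Filter.Eventually.of_forall fun t => ?_)
  simp only [Complex.ofReal_div]
  rw [smul_eq_mul, div_eq_mul_inv (l : ℂ), ← Complex.ofReal_inv, Complex.mul_cpow_ofReal_nonneg
    hl.le (by positivity), Complex.ofReal_inv, Complex.inv_cpow _ _ (by
      rw [Complex.arg_ofReal_of_nonneg hk.le]; exact Real.pi_pos.ne),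
    show -(s - (σ + t * Complex.I)) = -s + (σ + t * Complex.I) by ring, Complex.cpow_add _ _ hk',
    Complex.cpow_neg (k : ℂ) (σ + t * Complex.I), inv_inv]
  ring

/-! ### Absolutely convergent Dirichlet series of `ζ'/ζ` -/

lemma hasSum_zetaLogDeriv {w : ℂ} (hw : 1 < w.re) :
    HasSum (fun k : ℕ => (Λ (k + 1) : ℂ) * (((k + 1 : ℕ) : ℝ) : ℂ) ^ (-w)) (-zetaLogDeriv w) := by
  have h := (LSeriesSummable_vonMangoldt hw).hasSum
  change HasSum _ (LSeries _ w) at h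
  rw [LSeries_vonMangoldt_eq_deriv_riemannZeta_div hw, ← hasSum_nat_add_iff' 1] at h
  simp only [Finset.range_one, Finset.sum_singleton, LSeries.term_zero, sub_zero] at h
  rw [zetaLogDeriv, ← neg_div]
  refine h.congr_fun fun k => ?_
  rw [LSeries.term_of_ne_zero (Nat.succ_ne_zero k), Complex.cpow_neg, div_eq_mul_inv]
  push_cast
  rfl

lemma norm_vonMangoldt_mul_cpow (k : ℕ) (w : ℂ) :
    ‖(Λ (k + 1) : ℂ) * (((k + 1 : ℕ) : ℝ) : ℂ) ^ (-w)‖ =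
      Λ (k + 1) * ((k + 1 : ℕ) : ℝ) ^ (-w.re) := by
  rw [norm_mul, Complex.norm_cpow_eq_rpow_re_of_pos (by positivity), Complex.norm_real,
    Real.norm_of_nonneg vonMangoldt_nonneg, Complex.neg_re]

lemma summable_vonMangoldt_mul_rpow {σ : ℝ} (hσ : 1 < σ) :
    Summable (fun k : ℕ => Λ (k + 1) * ((k + 1 : ℕ) : ℝ) ^ (-σ)) := by
  have h := (hasSum_zetaLogDeriv (w := σ) (by simpa)).summable.norm
  simpa only [norm_vonMangoldt_mul_cpow, Complex.ofReal_re] using h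

lemma continuous_zetaLogDeriv_comp {g : ℝ → ℂ} (hg : Continuous g) (h1 : ∀ t, 1 < (g t).re) :
    Continuous fun t => zetaLogDeriv (g t) := by
  have hopen : IsOpen {w : ℂ | 1 < w.re} := isOpen_lt continuous_const Complex.continuous_re
  have hd : DifferentiableOn ℂ riemannZeta {w : ℂ | 1 < w.re} := fun w hw =>
    (differentiableAt_riemannZeta (fun h => by simp [h] at hw)).differentiableWithinAt
  have hc : ContinuousOn zetaLogDeriv {w : ℂ | 1 < w.re} :=
    (hd.deriv hopen).continuousOn.div hd.continuousOn
      fun w hw => riemannZeta_ne_zero_of_one_lt_re hw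
  exact hc.comp_continuous hg h1

lemma norm_zetaLogDeriv_le {w : ℂ} (hw : 1 < w.re) :
    ‖zetaLogDeriv w‖ ≤ ∑' k : ℕ, Λ (k + 1) * ((k + 1 : ℕ) : ℝ) ^ (-w.re) := by
  rw [← norm_neg, ← (hasSum_zetaLogDeriv hw).tsum_eq]
  simp_rw [← norm_vonMangoldt_mul_cpow]
  exact norm_tsum_le_tsum_norm (hasSum_zetaLogDeriv hw).summable.norm

/-! ### Summation over `k` and `l` -/

/-- The Mellin–Barnes formula along the line `Re w = σ`, where `w` is minus the variable of
integration `z` of `goldbach_F2_mellin_barnes`. -/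
lemma goldbach_F2_aux (s : ℂ) {σ : ℝ} (h1 : 1 < σ) (hσ : σ < s.re - 1) :
    Integrable (fun t : ℝ => Complex.Gamma (s - (σ + t * Complex.I)) *
      Complex.Gamma (σ + t * Complex.I) / Complex.Gamma s *
        zetaLogDeriv (s - (σ + t * Complex.I)) * zetaLogDeriv (σ + t * Complex.I)) ∧
    (∑' p : ℕ × ℕ,
        ((Λ (p.1 + 1) : ℂ) * (Λ (p.2 + 1) : ℂ)) / (((p.1 + 1) + (p.2 + 1) : ℕ) : ℂ) ^ s)
      = (1 / (2 * Real.pi) : ℂ) * ∫ t : ℝ, Complex.Gamma (s - (σ + t * Complex.I)) *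
      Complex.Gamma (σ + t * Complex.I) / Complex.Gamma s *
        zetaLogDeriv (s - (σ + t * Complex.I)) * zetaLogDeriv (σ + t * Complex.I) := by
  have hre : ∀ t : ℝ, ((σ : ℂ) + t * Complex.I).re = σ := by simp
  have hre' : ∀ t : ℝ, (s - ((σ : ℂ) + t * Complex.I)).re = s.re - σ := by simp
  have hσ' : 1 < s.re - σ := by linarith
  have hG := integrable_gamma_quotient s (σ := σ) (by linarith) (by linarith)
  set G : ℝ → ℂ := fun t : ℝ => Complex.Gamma (s - (σ + t * Complex.I)) *
      Complex.Gamma (σ + t * Complex.I) / Complex.Gamma s with hGdef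
  set L : ℝ → ℕ → ℝ := fun r k => Λ (k + 1) * ((k + 1 : ℕ) : ℝ) ^ (-r) with hL
  have hLnn : ∀ r k, 0 ≤ L r k := fun r k => mul_nonneg vonMangoldt_nonneg (by positivity)
  have hLs : ∀ r, 1 < r → Summable (L r) := fun r hr => summable_vonMangoldt_mul_rpow hr
  constructor
  · refine (hG.mul_bdd (c := ∑' k, L (s.re - σ) k) ?_ ?_).mul_bdd (c := ∑' k, L σ k) ?_ ?_
    · exact (continuous_zetaLogDeriv_comp (by fun_prop) fun t => by
        rwa [hre']).aestronglyMeasurable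
    · refine Filter.Eventually.of_forall fun t => ?_
      have := norm_zetaLogDeriv_le (w := s - (σ + t * Complex.I)) (by rwa [hre'])
      rwa [hre'] at this
    · exact (continuous_zetaLogDeriv_comp (by fun_prop) fun t => by
        rwa [hre]).aestronglyMeasurable
    · refine Filter.Eventually.of_forall fun t => ?_
      have := norm_zetaLogDeriv_le (w := σ + t * Complex.I) (by rwa [hre])
      rwa [hre] at this
  · set a : ℝ → ℕ → ℂ := fun t k =>
      (Λ (k + 1) : ℂ) * (((k + 1 : ℕ) : ℝ) : ℂ) ^ (-(s - (σ + t * Complex.I))) with ha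
    set b : ℝ → ℕ → ℂ := fun t l =>
      (Λ (l + 1) : ℂ) * (((l + 1 : ℕ) : ℝ) : ℂ) ^ (-(σ + t * Complex.I)) with hb
    have hna : ∀ t k, ‖a t k‖ = L (s.re - σ) k := fun t k => by
      rw [ha]; simp only; rw [norm_vonMangoldt_mul_cpow, hre']
    have hnb : ∀ t k, ‖b t k‖ = L σ k := fun t k => by
      rw [hb]; simp only; rw [norm_vonMangoldt_mul_cpow, hre]
    have hac : ∀ k, Continuous fun t => a t k := fun k => by
      refine continuous_const.mul (Continuous.const_cpow (by fun_prop) (Or.inl ?_))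
      exact_mod_cast Nat.succ_ne_zero k
    have hbc : ∀ k, Continuous fun t => b t k := fun k => by
      refine continuous_const.mul (Continuous.const_cpow (by fun_prop) (Or.inl ?_))
      exact_mod_cast Nat.succ_ne_zero k
    have hsum : ∀ t, HasSum (fun p : ℕ × ℕ => G t * (a t p.1 * b t p.2))
        (G t * zetaLogDeriv (s - (σ + t * Complex.I)) * zetaLogDeriv (σ + t * Complex.I)) := by
      intro t
      have hA : HasSum (a t) _ := hasSum_zetaLogDeriv (w := s - (σ + t * Complex.I)) (by rwa [hre'])
      have hB : HasSum (b t) _ := hasSum_zetaLogDeriv (w := σ + t * Complex.I) (by rwa [hre])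
      have := (hA.mul hB (summable_mul_of_summable_norm hA.summable.norm
        hB.summable.norm)).mul_left (G t)
      rwa [neg_mul_neg, ← mul_assoc] at this
    have hint : ∀ p : ℕ × ℕ, Integrable fun t => G t * (a t p.1 * b t p.2) := fun p =>
      hG.mul_bdd (c := L (s.re - σ) p.1 * L σ p.2)
        ((hac p.1).mul (hbc p.2)).aestronglyMeasurable
        (Filter.Eventually.of_forall fun t => by rw [norm_mul, hna, hnb])
    have hnorm : Summable fun p : ℕ × ℕ => ∫ t, ‖G t * (a t p.1 * b t p.2)‖ := by
      simp_rw [norm_mul, hna, hnb, integral_mul_const]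
      exact ((hLs _ hσ').mul_of_nonneg (hLs _ h1) (hLnn _) (hLnn _)).mul_left _
    have hswap := (hasSum_integral_of_summable_integral_norm hint hnorm).tsum_eq
    simp_rw [fun t => (hsum t).tsum_eq] at hswap
    rw [← hswap, ← tsum_mul_left]
    refine tsum_congr fun p => ?_
    have hk : (0 : ℝ) < ((p.1 + 1 : ℕ) : ℝ) := by positivity
    have hl : (0 : ℝ) < ((p.2 + 1 : ℕ) : ℝ) := by positivity
    have hmb := mellin_barnes_add s (σ := σ) (by linarith) (by linarith) hk hl
    have hpull : ∀ t, G t * (a t p.1 * b t p.2) = ((Λ (p.1 + 1) : ℂ) * (Λ (p.2 + 1) : ℂ)) *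
        (G t * ((((p.1 + 1 : ℕ) : ℝ) : ℂ) ^ (-(s - (σ + t * Complex.I))) *
          (((p.2 + 1 : ℕ) : ℝ) : ℂ) ^ (-(σ + t * Complex.I)))) := fun t => by
      simp only [ha, hb]; ring
    simp_rw [hpull]
    rw [integral_const_mul, mul_left_comm, hmb, Complex.cpow_neg, div_eq_mul_inv]
    push_cast
    rfl

/-- Mellin–Barnes integral expression for the Goldbach generating
double series `F₂(s) = ∑_{k,l ≥ 1} Λ(k)Λ(l)(k+l)^{-s}`. -/
theorem goldbach_F2_mellin_barnes
    (s : ℂ) (hs : 2 < s.re) (c : ℝ) (hc₁ : 1 - s.re < c) (hc₂ : c < -1) :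
    Integrable (fun t : ℝ =>
      Complex.Gamma (s + (c + t * Complex.I)) * Complex.Gamma (-(c + t * Complex.I))
        / Complex.Gamma s
        * zetaLogDeriv (s + (c + t * Complex.I)) * zetaLogDeriv (-(c + t * Complex.I))) ∧
    (∑' p : ℕ × ℕ,
        ((Λ (p.1 + 1) : ℂ) * (Λ (p.2 + 1) : ℂ)) / (((p.1 + 1) + (p.2 + 1) : ℕ) : ℂ) ^ s)
      = (1 / (2 * Real.pi) : ℂ) * ∫ t : ℝ,
          Complex.Gamma (s + (c + t * Complex.I)) * Complex.Gamma (-(c + t * Complex.I))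
            / Complex.Gamma s
            * zetaLogDeriv (s + (c + t * Complex.I)) * zetaLogDeriv (-(c + t * Complex.I)) := by
  -- The reflection `t ↦ -t` matches the line `w = σ + it`, `σ = -c`, with `w = -(c + it)`.
  have h := goldbach_F2_aux s (σ := -c) (by linarith) (by linarith)
  have e : ∀ t : ℝ, ((-c : ℝ) : ℂ) + ((-t : ℝ) : ℂ) * Complex.I = -(c + t * Complex.I) := fun t => by
    push_cast; ring
  have h1 := h.1.comp_neg
  have h2 := h.2
  rw [← integral_neg_eq_self] at h2
  simp_rw [e, sub_neg_eq_add] at h1 h2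
  exact ⟨h1, h2⟩
end

section
/- Assume RH. Then the set {ρ + ρ' : ρ, ρ' nontrivial zeros of ζ} is dense in the vertical line {s ∈ ℂ : Re s = 1}; that is, every s with Re s = 1 lies in the topological closure of {ρ + ρ' : ζ(ρ) = ζ(ρ') = 0, 0 < Re ρ < 1, 0 < Re ρ' < 1}. -/
/-!
The point is Littlewood's theorem that `ζ` has, for every `ε > 0`, a nontrivial zero within `ε` of
every sufficiently large height (`gap`). Given `s = 1 + it`, take a zero `ρ` high up and a zero
`ρ'` within `ε` of height `im ρ + t`. The conjugate of `ρ` is also a zero, and under RH the sum of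
`conj ρ` and `ρ'` has real part `1` and imaginary part within `ε` of `t`.

For `gap`, suppose `ζ` has no zero with `|im s - T| < ε`. Then `log ζ` is holomorphic on a thin
region around the horizontal segment from `2 + iT` to `1/8 + iT`, which is parametrised by a disc
independent of `T`. There `re log ζ ≤ log T + O(1)` (`zeta_bound`), while near the centre,
which corresponds to `2 + iT`, it is `O(1)`. The Borel–Carathéodory and three circles theorems
(`three_circles`) then give `log ζ = o(log T)` at `1/4 + iT` and `3/4 + iT`. This contradicts the
functional equation, by which `|ζ(1/4 + iT)| ≫ T^(1/4) |ζ(3/4 + iT)|` (`zeta_ratio`). In place of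
Stirling's formula, the lower bound for `|Γ(3/4 + iT)|` needed there comes from the reflection
formula at real parts `1/2` and `1` and a log-concavity property of Euler's products.
-/

open Complex Filter Topology Metric Set

/-! ### Growth of holomorphic functions with bounded real part -/

/-- Borel–Carathéodory combined with Hadamard's three circles: on a disc where `re g ≤ L`, a
bound `K` for `re g` near the centre forces `‖g w‖ = o(L)` at each fixed `w`. Interpolation
gives `‖g w‖ ≪ L ^ θ` with an exponent `θ < 1` depending only on `w` and the radii, which is why
the threshold for `L` is uniform in `g`. -/
theorem three_circles {R r0 K η : ℝ} {w : ℂ} (hr0 : 0 < r0) (hr0R : r0 < R) (hK : 0 < K)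
    (hη : 0 < η) (hw : ‖w‖ < R) (hw0 : w ≠ 0) :
    ∀ᶠ L : ℝ in atTop, ∀ g : ℂ → ℂ, DifferentiableOn ℂ g (ball 0 R) →
      (∀ z ∈ ball (0 : ℂ) R, (g z).re ≤ L) → (∀ z ∈ ball (0 : ℂ) r0, (g z).re ≤ K) →
      ‖g 0‖ ≤ K → ‖g w‖ ≤ η * L := by
  obtain ⟨R1, hwR1, hR1R⟩ := exists_between hw
  have hwpos : 0 < ‖w‖ := norm_pos_iff.mpr hw0
  set r1 : ℝ := min r0 ‖w‖ / 2 with hr1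
  have hr1pos : 0 < r1 := by positivity
  have hr1r0 : r1 ≤ r0 / 2 := by
    have := min_le_left r0 ‖w‖
    linarith
  have hr1w : r1 < ‖w‖ := by
    have := min_le_right r0 ‖w‖
    linarith
  have hR1pos : 0 < R1 := by linarith
  set A : ℝ := (3 * R1 + R) / (R - R1) with hA
  have hApos : 0 < A := by
    have : 0 < R - R1 := by linarith
    have : 0 < R := by linarith
    positivity
  set θ : ℝ := (Real.log ‖w‖ - Real.log r1) / (Real.log R1 - Real.log r1) with hθ
  have hlog1 : Real.log r1 < Real.log ‖w‖ := Real.log_lt_log hr1pos hr1w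
  have hlog2 : Real.log ‖w‖ < Real.log R1 := Real.log_lt_log hwpos hwR1
  have hθ0 : 0 ≤ θ := div_nonneg (by linarith) (by linarith)
  have hθ1 : θ < 1 := by
    rw [hθ, div_lt_one (by linarith)]; linarith
  have hlim : Tendsto (fun L : ℝ => (5 * K) ^ (1 - θ) * A ^ θ * L ^ (-(1 - θ))) atTop (𝓝 0) := by
    simpa using (tendsto_rpow_neg_atTop (by linarith : 0 < 1 - θ)).const_mul
      ((5 * K) ^ (1 - θ) * A ^ θ)
  filter_upwards [hlim.eventually (gt_mem_nhds hη), eventually_ge_atTop K,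
    eventually_gt_atTop 0] with L hL hLK hLpos g hg hgR hgr hg0
  have hsmall : ∀ z : ℂ, ‖z‖ ≤ r1 → ‖g z‖ ≤ 5 * K := by
    intro z hz
    have hzr : z ∈ ball (0 : ℂ) r0 := by simp; linarith
    have h := borelCaratheodory hK (hg.mono (ball_subset_ball hr0R.le)) hgr hr0 hzr
    have h1 : 0 < r0 - ‖z‖ := by linarith
    refine h.trans ?_
    rw [← add_div, div_le_iff₀ h1]
    nlinarith [norm_nonneg z, norm_nonneg (g 0)]
  have hbig : ∀ z : ℂ, ‖z‖ ≤ R1 → ‖g z‖ ≤ A * L := by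
    intro z hz
    have hzr : z ∈ ball (0 : ℂ) R := by simp; linarith
    have h := borelCaratheodory hLpos hg hgR (by linarith) hzr
    have h1 : 0 < R - ‖z‖ := by linarith
    have h2 : 0 < R - R1 := by linarith
    refine h.trans ?_
    rw [← add_div, hA, div_mul_eq_mul_div]
    have : ‖g 0‖ ≤ L := by linarith
    have hR : 0 < R := by linarith
    gcongr
    nlinarith [norm_nonneg z, norm_nonneg (g 0)]
  have hmaps : MapsTo exp (re ⁻¹' Icc (Real.log r1) (Real.log R1)) (closedBall (0 : ℂ) R1) := by
    intro z hz
    rw [mem_closedBall_zero_iff, norm_exp, ← Real.exp_log hR1pos]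
    exact Real.exp_le_exp.mpr hz.2
  have hdiff : Differentiable ℂ exp := differentiable_exp
  have hsub : closedBall (0 : ℂ) R1 ⊆ ball 0 R := closedBall_subset_ball hR1R
  have hcl : closure (HadamardThreeLines.verticalStrip (Real.log r1) (Real.log R1)) ⊆
      re ⁻¹' Icc (Real.log r1) (Real.log R1) := by
    apply closure_minimal
    · intro z hz; exact ⟨hz.1.le, hz.2.le⟩
    · exact isClosed_Icc.preimage continuous_re
  -- The three circles theorem for `g` is the three lines theorem for `g ∘ exp`, at `log w`.
  have hH := HadamardThreeLines.norm_le_interp_of_mem_verticalClosedStrip'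
    (f := fun z => g (exp z)) (z := log w) (a := 5 * K) (b := A * L)
    (l := Real.log r1) (u := Real.log R1) (by linarith)
    (by
      simp only [HadamardThreeLines.verticalClosedStrip, mem_preimage, log_re]
      exact ⟨hlog1.le, hlog2.le⟩)
    (by
      have : DifferentiableOn ℂ (fun z => g (exp z))
          (closure (HadamardThreeLines.verticalStrip (Real.log r1) (Real.log R1))) :=
        hg.comp hdiff.differentiableOn (fun z hz => hsub (hmaps (hcl hz)))
      exact this.diffContOnCl)
    ⟨A * L, by
      rintro _ ⟨z, hz, rfl⟩
      exact hbig _ (mem_closedBall_zero_iff.mp (hmaps hz))⟩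
    (fun z hz => hsmall _ (by
      rw [norm_exp, show z.re = Real.log r1 from hz, Real.exp_log hr1pos]))
    (fun z hz => hbig _ (by
      rw [norm_exp, show z.re = Real.log R1 from hz, Real.exp_log hR1pos]))
  simp only [exp_log hw0, log_re] at hH
  rw [← hθ] at hH
  refine hH.trans ?_
  rw [Real.mul_rpow hApos.le hLpos.le]
  have e : L ^ θ = L ^ (-(1 - θ)) * L := by
    rw [← Real.rpow_add_one hLpos.ne']; congr 1; ring
  rw [e]
  calc _ = ((5 * K) ^ (1 - θ) * A ^ θ * L ^ (-(1 - θ))) * L := by ring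
    _ ≤ _ := by gcongr

/-- A zero-free holomorphic function on a disc has a holomorphic logarithm, here normalised to
be the principal one at the centre. -/
theorem exists_log_on_ball {R : ℝ} (hR : 0 < R) {h : ℂ → ℂ} (hd : DifferentiableOn ℂ h (ball 0 R))
    (h0 : ∀ z ∈ ball (0 : ℂ) R, h z ≠ 0) :
    ∃ g : ℂ → ℂ, DifferentiableOn ℂ g (ball 0 R) ∧ (∀ z ∈ ball (0 : ℂ) R, exp (g z) = h z) ∧
      g 0 = log (h 0) := by
  have hq : DifferentiableOn ℂ (fun z => deriv h z / h z) (ball 0 R) :=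
    (hd.deriv isOpen_ball).div hd h0
  obtain ⟨g, hg0, hg⟩ := hq.isExactOn_ball.with_val_at 0 (log (h 0))
  have hmem : (0 : ℂ) ∈ ball (0 : ℂ) R := mem_ball_self hR
  refine ⟨g, fun z hz => (hg z hz).differentiableAt.differentiableWithinAt, ?_, hg0⟩
  have hder : ∀ z ∈ ball (0 : ℂ) R, HasDerivAt (fun z => exp (-g z) * h z) 0 z := by
    intro z hz
    have h1 := (hd.differentiableAt (isOpen_ball.mem_nhds hz)).hasDerivAt
    have h2 := ((hg z hz).neg.cexp).mul h1
    convert! h2 using 1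
    have := h0 z hz
    field_simp
    simp
  intro z hz
  have hc := (convex_ball (0 : ℂ) R).norm_image_sub_le_of_norm_hasDerivWithin_le (𝕜 := ℂ)
    (f := fun z => exp (-g z) * h z) (C := 0) (fun y hy => (hder y hy).hasDerivWithinAt)
    (by simp) hmem hz
  have hc' : exp (-g z) * h z = exp (-g 0) * h 0 := by
    rw [zero_mul] at hc
    exact sub_eq_zero.mp (norm_le_zero_iff.mp hc)
  rw [hg0, exp_neg, exp_neg, exp_log (h0 0 hmem), inv_mul_cancel₀ (h0 0 hmem)] at hc'
  field_simp at hc'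
  exact hc'.symm

/-! ### Bounds for zeta -/

/-- The difference `(n+1)^(-s) - ∫ x^(-s) dx` over `[n+1, n+2]`, with the integral evaluated in
closed form. For `0 < re s` and `s ≠ 1` these terms sum to `ζ(s) - 1 / (s - 1)`; at `s = 1` the
definition carries a division by zero and is not used. -/
noncomputable def zterm (n : ℕ) (s : ℂ) : ℂ :=
  ((n + 1 : ℕ) : ℂ) ^ (-s) -
    (((n + 2 : ℕ) : ℂ) ^ (1 - s) - ((n + 1 : ℕ) : ℂ) ^ (1 - s)) / (1 - s)

/-- Two applications of the mean value inequality: one to `x ↦ x^(-s)`, and one to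
`x ↦ x (n+1)^(-s) - x^(1-s) / (1-s)`, whose increment over `[n+1, n+2]` is `zterm n s`. -/
theorem norm_zterm_le (n : ℕ) {s : ℂ} (hs : 0 ≤ s.re) (h1 : s ≠ 1) :
    ‖zterm n s‖ ≤ ‖s‖ * ((n + 1 : ℕ) : ℝ) ^ (-(s.re + 1)) := by
  set a : ℝ := ((n + 1 : ℕ) : ℝ) with ha
  have ha0 : 0 < a := by positivity
  have h1s : (1 : ℂ) - s ≠ 0 := sub_ne_zero.mpr h1.symm
  have hderiv : ∀ (c : ℂ) (x : ℝ), x ∈ Icc a (a + 1) →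
      HasDerivAt (fun y : ℝ => (y : ℂ) ^ c) (c * (x : ℂ) ^ (c - 1)) x := by
    intro c x hx
    have hx0 : 0 < x := lt_of_lt_of_le ha0 hx.1
    have := (hasDerivAt_id (x : ℂ)).cpow_const (c := c) (Or.inl (by simpa using hx0))
    simpa using this.comp_ofReal
  have hinner : ∀ x ∈ Icc a (a + 1), ‖(x : ℂ) ^ (-s) - (a : ℂ) ^ (-s)‖ ≤
      ‖s‖ * a ^ (-(s.re + 1)) := by
    intro x hx
    have := (convex_Icc a (a + 1)).norm_image_sub_le_of_norm_hasDerivWithin_le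
      (f := fun y : ℝ => (y : ℂ) ^ (-s)) (C := ‖s‖ * a ^ (-(s.re + 1)))
      (fun y hy => (hderiv (-s) y hy).hasDerivWithinAt)
      (fun y hy => by
        have hy0 : 0 < y := lt_of_lt_of_le ha0 hy.1
        rw [norm_mul, norm_neg, norm_cpow_eq_rpow_re_of_pos hy0]
        gcongr
        have e : (-s - 1).re = -(s.re + 1) := by simp; ring
        rw [e]
        exact Real.rpow_le_rpow_of_nonpos ha0 hy.1 (by linarith))
      (left_mem_Icc.mpr (by linarith)) hx
    refine this.trans ?_
    have h2 : ‖x - a‖ ≤ 1 := by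
      rw [Real.norm_of_nonneg (by linarith [hx.1])]; linarith [hx.2]
    exact mul_le_of_le_one_right (by positivity) h2
  have hout := (convex_Icc a (a + 1)).norm_image_sub_le_of_norm_hasDerivWithin_le
      (f := fun y : ℝ => (y : ℂ) * (a : ℂ) ^ (-s) - (y : ℂ) ^ (1 - s) / (1 - s))
      (f' := fun y : ℝ => (a : ℂ) ^ (-s) - (y : ℂ) ^ (-s))
      (C := ‖s‖ * a ^ (-(s.re + 1)))
      (fun y hy => by
        have h := ((hasDerivAt_id (y : ℂ)).comp_ofReal.mul_const ((a : ℂ) ^ (-s))).sub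
          ((hderiv (1 - s) y hy).div_const (1 - s))
        convert! h.hasDerivWithinAt using 1
        rw [mul_div_cancel_left₀ _ h1s]
        ring_nf)
      (fun y hy => by rw [norm_sub_rev]; exact hinner y hy)
      (left_mem_Icc.mpr (by linarith)) (right_mem_Icc.mpr (by linarith))
  have e : zterm n s = (((a + 1 : ℝ) : ℂ) * (a : ℂ) ^ (-s) -
      ((a + 1 : ℝ) : ℂ) ^ (1 - s) / (1 - s)) -
      ((a : ℂ) * (a : ℂ) ^ (-s) - (a : ℂ) ^ (1 - s) / (1 - s)) := by
    have : ((n + 2 : ℕ) : ℂ) = ((a + 1 : ℝ) : ℂ) := by rw [ha]; push_cast; ring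
    rw [zterm, this, show ((n + 1 : ℕ) : ℂ) = (a : ℂ) by rw [ha]; norm_cast]
    push_cast
    ring
  rw [e]
  simpa using hout

/-- Linear growth of `ζ` in the half plane `re s ≥ 1/8`. The series `∑ zterm n s` agrees with
`ζ(s) - 1 / (s - 1)` for `re s > 1`, and continues it to the left by the identity theorem. The
quadrant `V` avoids the pole at `1`. -/
theorem zeta_bound : ∃ C : ℝ, 0 < C ∧ ∀ s : ℂ, 1 / 8 ≤ s.re → 1 ≤ s.im →
    ‖riemannZeta s‖ ≤ C * ‖s‖ := by
  set u : ℕ → ℝ := fun n => ((n + 1 : ℕ) : ℝ) ^ (-(17 / 16 : ℝ)) with hu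
  have hus : Summable u := by
    have : Summable (fun n : ℕ => (n : ℝ) ^ (-(17 / 16 : ℝ))) := by
      rw [Real.summable_nat_rpow]; norm_num
    exact (summable_nat_add_iff 1).mpr this
  have hne : ∀ s : ℂ, 0 < s.im → s ≠ 1 := by
    rintro s h rfl; simp at h
  have hbd : ∀ (n : ℕ) (s : ℂ), 1 / 16 ≤ s.re → 0 < s.im → ‖zterm n s‖ ≤ ‖s‖ * u n := by
    intro n s hs hi
    refine (norm_zterm_le n (by linarith) (hne s hi)).trans ?_
    gcongr
    exact Real.rpow_le_rpow_of_exponent_le (by simp) (by linarith)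
  set V : Set ℂ := {s | 1 / 16 < s.re} ∩ {s | 0 < s.im} with hV
  have hVo : IsOpen V := (isOpen_lt continuous_const continuous_re).inter
    (isOpen_lt continuous_const continuous_im)
  have hVc : Convex ℝ V := (convex_halfSpace_re_gt _).inter (convex_halfSpace_im_gt _)
  have hzd : ∀ n, DifferentiableOn ℂ (zterm n) V := by
    intro n s hs
    have h1 : (1 : ℂ) - s ≠ 0 := sub_ne_zero.mpr (hne s hs.2).symm
    have ha : ((n + 1 : ℕ) : ℂ) ≠ 0 := by exact_mod_cast Nat.succ_ne_zero n
    have hb : ((n + 2 : ℕ) : ℂ) ≠ 0 := by exact_mod_cast Nat.succ_ne_zero (n + 1)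
    apply DifferentiableAt.differentiableWithinAt
    unfold zterm
    refine DifferentiableAt.sub ?_ (DifferentiableAt.div (DifferentiableAt.sub ?_ ?_) ?_ h1)
    · exact DifferentiableAt.const_cpow (by fun_prop) (Or.inl ha)
    · exact DifferentiableAt.const_cpow (by fun_prop) (Or.inl hb)
    · exact DifferentiableAt.const_cpow (by fun_prop) (Or.inl ha)
    · fun_prop
  have hF : DifferentiableOn ℂ (fun s => ∑' n, zterm n s) V := by
    intro s hs
    have ho : IsOpen (V ∩ ball 0 (‖s‖ + 1)) := hVo.inter isOpen_ball
    have := differentiableOn_tsum_of_summable_norm (u := fun n => (‖s‖ + 1) * u n)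
      (F := zterm) (hus.mul_left _) (fun n => (hzd n).mono inter_subset_left) ho
      (fun n z hz => by
        refine (hbd n z hz.1.1.le hz.1.2).trans ?_
        have h2 : ‖z‖ < ‖s‖ + 1 := by simpa using hz.2
        gcongr)
    exact ((this s ⟨hs, by simp⟩).differentiableAt (ho.mem_nhds ⟨hs, by simp⟩)).differentiableWithinAt
  have hG : DifferentiableOn ℂ (fun s => riemannZeta s - 1 / (s - 1)) V := by
    intro s hs
    apply DifferentiableAt.differentiableWithinAt
    refine (differentiableAt_riemannZeta (hne s hs.2)).sub ?_
    exact (differentiableAt_const _).div (by fun_prop) (sub_ne_zero.mpr (hne s hs.2))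
  have hconv : ∀ s : ℂ, 1 < s.re → 0 < s.im →
      ∑' n, zterm n s = riemannZeta s - 1 / (s - 1) := by
    intro s hs hi
    have h1 : (1 : ℂ) - s ≠ 0 := sub_ne_zero.mpr (hne s hi).symm
    have h1' : s - 1 ≠ 0 := sub_ne_zero.mpr (hne s hi)
    have hA : HasSum (fun n : ℕ => ((n + 1 : ℕ) : ℂ) ^ (-s)) (riemannZeta s) := by
      have hsum : Summable (fun n : ℕ => ((n + 1 : ℕ) : ℂ) ^ (-s)) := by
        have := (summable_nat_add_iff 1).mpr (Complex.summable_one_div_nat_cpow.mpr hs)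
        refine this.congr fun n => ?_
        rw [cpow_neg, one_div]
      convert! hsum.hasSum using 1
      rw [zeta_eq_tsum_one_div_nat_add_one_cpow hs]
      congr 1; ext n
      rw [cpow_neg, one_div]; push_cast; rfl
    have hsummable : Summable (fun n => zterm n s) :=
      Summable.of_norm_bounded (hus.mul_left ‖s‖) (fun n => hbd n s (by linarith) hi)
    have hT : Tendsto (fun N : ℕ => ((N + 1 : ℕ) : ℂ) ^ (1 - s)) atTop (𝓝 0) := by
      rw [tendsto_zero_iff_norm_tendsto_zero]
      have h3 : Tendsto (fun N : ℕ => ((N + 1 : ℕ) : ℝ) ^ (-(s.re - 1))) atTop (𝓝 0) :=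
        (tendsto_rpow_neg_atTop (by linarith)).comp
          (tendsto_natCast_atTop_atTop.comp (tendsto_add_atTop_nat 1))
      refine h3.congr fun N => ?_
      rw [norm_natCast_cpow_of_pos (Nat.succ_pos N)]
      congr 1; simp
    have hpart : ∀ N : ℕ, ∑ n ∈ Finset.range N, zterm n s =
        ∑ n ∈ Finset.range N, ((n + 1 : ℕ) : ℂ) ^ (-s) -
          (((N + 1 : ℕ) : ℂ) ^ (1 - s) - 1) / (1 - s) := by
      intro N
      simp only [zterm]
      rw [Finset.sum_sub_distrib, ← Finset.sum_div]
      have := Finset.sum_range_sub (fun n : ℕ => ((n + 1 : ℕ) : ℂ) ^ (1 - s)) N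
      simp only [show ∀ n : ℕ, n + 1 + 1 = n + 2 from fun n => rfl] at this
      rw [this]; simp
    have hlim1 := hsummable.hasSum.tendsto_sum_nat
    have hlim2 := hA.tendsto_sum_nat.sub ((hT.sub_const 1).div_const (1 - s))
    rw [tendsto_congr hpart] at hlim1
    rw [tendsto_nhds_unique hlim1 hlim2]
    field_simp
    ring
  have heq : EqOn (fun s => ∑' n, zterm n s) (fun s => riemannZeta s - 1 / (s - 1)) V := by
    have hz0 : (2 + I : ℂ) ∈ V := by constructor <;> norm_num
    refine (hF.analyticOnNhd hVo).eqOn_of_preconnected_of_eventuallyEq (hG.analyticOnNhd hVo)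
      hVc.isPreconnected hz0 ?_
    have ho : IsOpen ({s : ℂ | 1 < s.re} ∩ {s | 0 < s.im}) :=
      (isOpen_lt continuous_const continuous_re).inter (isOpen_lt continuous_const continuous_im)
    filter_upwards [ho.mem_nhds (x := 2 + I) (by constructor <;> norm_num)] with s hs
    exact hconv s hs.1 hs.2
  refine ⟨∑' n, u n + 1, by have : 0 ≤ ∑' n, u n := tsum_nonneg (fun n => by positivity)
                            linarith, fun s hs hi => ?_⟩
  have h1 := heq (x := s) ⟨show (1 / 16 : ℝ) < s.re by linarith, show (0 : ℝ) < s.im by linarith⟩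
  simp only at h1
  have h2 : ‖∑' n, zterm n s‖ ≤ ‖s‖ * ∑' n, u n := by
    rw [← tsum_mul_left]
    exact tsum_of_norm_bounded (hus.mul_left ‖s‖).hasSum (fun n => hbd n s (by linarith) (by linarith))
  have h3 : (1 : ℝ) ≤ ‖s - 1‖ := by
    have := abs_im_le_norm (s - 1)
    simp only [sub_im, one_im, sub_zero] at this
    linarith [le_abs_self s.im]
  have h4 : (1 : ℝ) ≤ ‖s‖ := by
    have := abs_im_le_norm s
    linarith [le_abs_self s.im]
  have h5 : ‖1 / (s - 1)‖ ≤ 1 := by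
    rw [norm_div, norm_one]; exact div_le_one_of_le₀ h3 (by positivity)
  have h6 : riemannZeta s = ∑' n, zterm n s + 1 / (s - 1) := by rw [h1]; ring
  rw [h6]
  refine (norm_add_le _ _).trans ?_
  linarith

theorem zeta_bound_right : ∃ M : ℝ, ∀ s : ℂ, 3 / 2 ≤ s.re → ‖riemannZeta s‖ ≤ M := by
  have hsum : Summable (fun n : ℕ => 1 / ((n : ℝ) + 1) ^ (3 / 2 : ℝ)) := by
    have := (summable_nat_add_iff 1).mpr
      (Real.summable_one_div_nat_rpow.mpr (by norm_num : (1 : ℝ) < 3 / 2))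
    simpa using this
  refine ⟨∑' n : ℕ, 1 / ((n : ℝ) + 1) ^ (3 / 2 : ℝ), fun s hs => ?_⟩
  rw [zeta_eq_tsum_one_div_nat_add_one_cpow (by linarith)]
  refine tsum_of_norm_bounded hsum.hasSum fun n => ?_
  have e : ((n : ℂ) + 1) = ((n + 1 : ℝ) : ℂ) := by push_cast; rfl
  rw [norm_div, norm_one, e, norm_cpow_eq_rpow_re_of_pos (by positivity)]
  gcongr
  linarith [(Nat.cast_nonneg n : (0 : ℝ) ≤ n)]

/-- Uses `|ζ(2 + iT) - 1| ≤ π²/6 - 1 ≤ 2/3`. -/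
theorem norm_log_zeta_two (T : ℝ) : ‖log (riemannZeta (2 + T * I))‖ ≤ 6 := by
  have hre : (2 + T * I : ℂ).re = 2 := by simp
  have h1 : ‖riemannZeta (2 + T * I) - 1‖ ≤ 2 / 3 := by
    have hs2 : HasSum (fun n : ℕ => 1 / ((n : ℝ) + 2) ^ 2) (Real.pi ^ 2 / 6 - 1) := by
      have := (hasSum_nat_add_iff' 2).mpr hasSum_zeta_two
      simpa [Finset.sum_range_succ] using this
    have hsum : Summable (fun n : ℕ => 1 / ((n : ℂ) + 1) ^ (2 + T * I : ℂ)) := by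
      have h := (Complex.summable_one_div_nat_cpow (p := 2 + T * I)).mpr (by rw [hre]; norm_num)
      simpa using (summable_nat_add_iff 1).mpr h
    have e : riemannZeta (2 + T * I) - 1 =
        ∑' n : ℕ, 1 / ((n : ℂ) + 2) ^ (2 + T * I : ℂ) := by
      rw [zeta_eq_tsum_one_div_nat_add_one_cpow (by rw [hre]; norm_num), hsum.tsum_eq_zero_add]
      simp only [Nat.cast_zero, zero_add, one_cpow, div_one, add_sub_cancel_left]
      congr 1; ext n; push_cast; ring_nf
    rw [e]
    have h2 : Real.pi ^ 2 / 6 - 1 ≤ 2 / 3 := by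
      nlinarith [Real.pi_lt_d2, Real.pi_pos]
    refine (tsum_of_norm_bounded hs2 fun n => ?_).trans h2
    have e : ((n : ℂ) + 2) = ((n + 2 : ℝ) : ℂ) := by push_cast; rfl
    rw [norm_div, norm_one, e, norm_cpow_eq_rpow_re_of_pos (by positivity), hre]
    norm_num
  set z := riemannZeta (2 + T * I)
  have hup : ‖z‖ ≤ 5 / 3 := by
    have := norm_add_le (z - 1) 1
    simp at this; linarith
  have hlo : 1 / 3 ≤ ‖z‖ := by
    have := norm_sub_norm_le 1 (1 - z)
    rw [norm_sub_rev 1 z] at this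
    simp at this; linarith
  have hpos : 0 < ‖z‖ := by linarith
  have hl1 := Real.log_le_sub_one_of_pos hpos
  have hl2 := Real.one_sub_inv_le_log_of_pos hpos
  have hinv : ‖z‖⁻¹ ≤ 3 := by
    rw [inv_le_comm₀ hpos (by norm_num)]; linarith
  have h3 := norm_le_abs_re_add_abs_im (log z)
  rw [log_re, log_im] at h3
  have h4 := abs_arg_le_pi z
  have h5 : |Real.log ‖z‖| ≤ 2 := abs_le.mpr ⟨by linarith, by linarith⟩
  linarith [Real.pi_lt_four]

/-! ### Gamma on vertical lines and the functional equation -/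

/-- The factorwise inequality behind `GammaSeq_ineq`, with `x = 3/4 + j`. -/
theorem factor_ineq {x T : ℝ} (hx : 1 / 2 < x) :
    (x ^ 2 + T ^ 2) ^ 2 * ((x - 1 / 4) ^ 2 * (x + 1 / 4) ^ 2) ≤
      x ^ 4 * (((x - 1 / 4) ^ 2 + T ^ 2) * ((x + 1 / 4) ^ 2 + T ^ 2)) := by
  have hx2 : 1 / 4 < x ^ 2 := by nlinarith
  have key : x ^ 4 * (((x - 1 / 4) ^ 2 + T ^ 2) * ((x + 1 / 4) ^ 2 + T ^ 2)) -
      (x ^ 2 + T ^ 2) ^ 2 * ((x - 1 / 4) ^ 2 * (x + 1 / 4) ^ 2) =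
      T ^ 2 * (x ^ 2 * (3 / 8 * x ^ 2 - 1 / 128)) + T ^ 4 * (x ^ 2 / 8 - 1 / 256) := by ring
  have h1 : 0 ≤ T ^ 2 * (x ^ 2 * (3 / 8 * x ^ 2 - 1 / 128)) :=
    mul_nonneg (sq_nonneg _) (mul_nonneg (sq_nonneg _) (by linarith))
  have h2 : 0 ≤ T ^ 4 * (x ^ 2 / 8 - 1 / 256) := mul_nonneg (by positivity) (by linarith)
  linarith

theorem norm_add_nat_sq (σ T : ℝ) (j : ℕ) :
    ‖(σ : ℂ) + T * I + j‖ ^ 2 = (σ + j) ^ 2 + T ^ 2 := by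
  rw [Complex.sq_norm, normSq_apply]; simp; ring

theorem norm_GammaSeq (σ T : ℝ) {n : ℕ} (hn : 0 < n) :
    ‖GammaSeq (σ + T * I) n‖ =
      (n : ℝ) ^ σ * n.factorial / ∏ j ∈ Finset.range (n + 1), ‖(σ : ℂ) + T * I + j‖ := by
  rw [GammaSeq, norm_div, norm_mul, norm_natCast_cpow_of_pos hn, norm_prod]
  simp

/-- Midpoint log-concavity of `σ ↦ |Γ(σ + iT)| / Γ(σ)` for the points `1/2`, `3/4`, `1`, at the
level of Euler's finite products. Both sides are squared so that only squared norms of the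
factors `σ + iT + j` occur. -/
theorem GammaSeq_ineq (T : ℝ) {n : ℕ} (hn : 0 < n) :
    (‖GammaSeq ((1 / 2 : ℝ) + T * I) n‖ * ‖GammaSeq ((1 : ℝ) + T * I) n‖ *
      ‖GammaSeq ((3 / 4 : ℝ) + (0 : ℝ) * I) n‖ ^ 2) ^ 2 ≤
    (‖GammaSeq ((3 / 4 : ℝ) + T * I) n‖ ^ 2 *
      (‖GammaSeq ((1 / 2 : ℝ) + (0 : ℝ) * I) n‖ * ‖GammaSeq ((1 : ℝ) + (0 : ℝ) * I) n‖)) ^ 2 := by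
  have hn' : (0 : ℝ) < n := by exact_mod_cast hn
  have hpos : ∀ σ T : ℝ, 0 < σ →
      0 < ∏ j ∈ Finset.range (n + 1), ‖(σ : ℂ) + T * I + j‖ := by
    intro σ T hσ
    refine Finset.prod_pos fun j _ => norm_pos_iff.mpr fun h => ?_
    have := congrArg re h
    simp at this
    have : (0 : ℝ) ≤ j := by positivity
    linarith
  simp only [norm_GammaSeq _ _ hn]
  have a1 := hpos (1 / 2) T (by norm_num)
  have a2 := hpos 1 T (by norm_num)
  have a3 := hpos (3 / 4) T (by norm_num)
  have b1 := hpos (1 / 2) 0 (by norm_num)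
  have b2 := hpos 1 0 (by norm_num)
  have b3 := hpos (3 / 4) 0 (by norm_num)
  have key : ((∏ j ∈ Finset.range (n + 1), ‖((3 / 4 : ℝ) : ℂ) + T * I + j‖) ^ 2 *
      ((∏ j ∈ Finset.range (n + 1), ‖((1 / 2 : ℝ) : ℂ) + (0 : ℝ) * I + j‖) *
        ∏ j ∈ Finset.range (n + 1), ‖((1 : ℝ) : ℂ) + (0 : ℝ) * I + j‖)) ^ 2 ≤
      ((∏ j ∈ Finset.range (n + 1), ‖((3 / 4 : ℝ) : ℂ) + (0 : ℝ) * I + j‖) ^ 2 *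
      ((∏ j ∈ Finset.range (n + 1), ‖((1 / 2 : ℝ) : ℂ) + T * I + j‖) *
        ∏ j ∈ Finset.range (n + 1), ‖((1 : ℝ) : ℂ) + T * I + j‖)) ^ 2 := by
    simp only [← Finset.prod_pow, ← Finset.prod_mul_distrib]
    refine Finset.prod_le_prod (fun _ _ => by positivity) fun j _ => ?_
    simp only [mul_pow, norm_add_nat_sq]
    have := factor_ineq (x := 3 / 4 + j) (T := T) (by
      have : (0 : ℝ) ≤ j := by positivity
      linarith)
    convert! this using 1 <;> ring
  have hN : (n : ℝ) ^ (1 / 2 : ℝ) * (n : ℝ) ^ (1 : ℝ) = ((n : ℝ) ^ (3 / 4 : ℝ)) ^ 2 := by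
    rw [← Real.rpow_natCast, ← Real.rpow_mul hn'.le, ← Real.rpow_add hn']; norm_num
  have hf : (0 : ℝ) < n.factorial := by exact_mod_cast n.factorial_pos
  -- What remains is algebra in the products, the powers of `n`, and `n!`.
  generalize (∏ j ∈ Finset.range (n + 1), ‖((3 / 4 : ℝ) : ℂ) + T * I + j‖) = P3 at *
  generalize (∏ j ∈ Finset.range (n + 1), ‖((1 / 2 : ℝ) : ℂ) + T * I + j‖) = P1 at *
  generalize (∏ j ∈ Finset.range (n + 1), ‖((1 : ℝ) : ℂ) + T * I + j‖) = P2 at *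
  generalize (∏ j ∈ Finset.range (n + 1), ‖((3 / 4 : ℝ) : ℂ) + (0 : ℝ) * I + j‖) = Q3 at *
  generalize (∏ j ∈ Finset.range (n + 1), ‖((1 / 2 : ℝ) : ℂ) + (0 : ℝ) * I + j‖) = Q1 at *
  generalize (∏ j ∈ Finset.range (n + 1), ‖((1 : ℝ) : ℂ) + (0 : ℝ) * I + j‖) = Q2 at *
  have hN0 : 0 < (n : ℝ) ^ (3 / 4 : ℝ) := by positivity
  generalize (n : ℝ) ^ (3 / 4 : ℝ) = m3 at *
  generalize (n : ℝ) ^ (1 / 2 : ℝ) = m1 at *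
  generalize (n : ℝ) ^ (1 : ℝ) = m2 at *
  generalize (n.factorial : ℝ) = F at *
  have e1 : m1 * F / P1 * (m2 * F / P2) * (m3 * F / Q3) ^ 2 =
      m3 ^ 4 * F ^ 4 / (Q3 ^ 2 * (P1 * P2)) := by
    rw [show m1 * F / P1 * (m2 * F / P2) * (m3 * F / Q3) ^ 2 =
      (m1 * m2) * m3 ^ 2 * F ^ 4 / (Q3 ^ 2 * (P1 * P2)) by field_simp, hN]; ring
  have e2 : (m3 * F / P3) ^ 2 * (m1 * F / Q1 * (m2 * F / Q2)) =
      m3 ^ 4 * F ^ 4 / (P3 ^ 2 * (Q1 * Q2)) := by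
    rw [show (m3 * F / P3) ^ 2 * (m1 * F / Q1 * (m2 * F / Q2)) =
      (m1 * m2) * m3 ^ 2 * F ^ 4 / (P3 ^ 2 * (Q1 * Q2)) by field_simp, hN]; ring
  rw [e1, e2, div_pow, div_pow]
  gcongr

theorem norm_Gamma_conj_line (σ T : ℝ) :
    ‖Gamma (σ - T * I)‖ = ‖Gamma (σ + T * I)‖ := by
  have : (σ - T * I : ℂ) = (starRingEnd ℂ) (σ + T * I) := by simp [sub_eq_add_neg]
  rw [this, Gamma_conj, norm_conj]

theorem norm_sin_le (z : ℂ) : ‖sin z‖ ≤ Real.exp |z.im| := by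
  rw [Complex.sin]
  rw [norm_div, norm_mul, norm_I, mul_one]
  have h1 : ‖cexp (-z * I)‖ ≤ Real.exp |z.im| := by
    rw [norm_exp]; simpa using le_abs_self z.im
  have h2 : ‖cexp (z * I)‖ ≤ Real.exp |z.im| := by
    rw [norm_exp]; simpa using neg_le_abs z.im
  have := norm_sub_le (cexp (-z * I)) (cexp (z * I))
  rw [Complex.norm_ofNat, div_le_iff₀ (by norm_num)]
  linarith

theorem norm_sin_pos_of_im {z : ℂ} (hz : z.im ≠ 0) : 0 < ‖sin z‖ := by
  rw [norm_pos_iff]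
  intro h
  obtain ⟨k, hk⟩ := Complex.sin_eq_zero_iff.mp h
  apply hz; rw [hk]; simp

/-- The reflection formula on the critical line, where `1 - s` is the conjugate of `s`. -/
theorem norm_Gamma_half {T : ℝ} (hT : 0 < T) :
    Real.pi * Real.exp (-(Real.pi * T)) ≤ ‖Gamma ((1 / 2 : ℝ) + T * I)‖ ^ 2 := by
  have h := congrArg norm (Complex.Gamma_mul_Gamma_one_sub ((1 / 2 : ℝ) + T * I))
  have e : (1 : ℂ) - ((1 / 2 : ℝ) + T * I) = ((1 / 2 : ℝ) : ℂ) - T * I := by push_cast; ring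
  have him : (Real.pi * ((1 / 2 : ℝ) + T * I) : ℂ).im = Real.pi * T := by simp
  rw [e, norm_mul, norm_Gamma_conj_line, ← sq, norm_div, norm_real,
    Real.norm_of_nonneg Real.pi_pos.le] at h
  have hp : 0 < Real.pi * T := mul_pos Real.pi_pos hT
  have h1 := norm_sin_le (Real.pi * ((1 / 2 : ℝ) + T * I))
  have h2 := norm_sin_pos_of_im (z := Real.pi * ((1 / 2 : ℝ) + T * I)) (by rw [him]; exact hp.ne')
  rw [him, abs_of_pos hp] at h1
  rw [h, Real.exp_neg, ← div_eq_mul_inv]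
  gcongr

/-- The reflection formula at `iT`, shifted by `Γ(1 + iT) = iT Γ(iT)`. -/
theorem norm_Gamma_one {T : ℝ} (hT : 0 < T) :
    Real.pi * T * Real.exp (-(Real.pi * T)) ≤ ‖Gamma ((1 : ℝ) + T * I)‖ ^ 2 := by
  have h := congrArg norm (Complex.Gamma_mul_Gamma_one_sub (T * I))
  have e : (1 : ℂ) - T * I = ((1 : ℝ) : ℂ) - T * I := by push_cast; ring
  have him : (Real.pi * (T * I) : ℂ).im = Real.pi * T := by simp
  have hTI : (T * I : ℂ) ≠ 0 := by simp [hT.ne']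
  have hG := congrArg norm (Complex.Gamma_add_one (T * I) hTI)
  rw [add_comm, norm_mul, norm_mul, norm_I, mul_one, norm_real, Real.norm_of_nonneg hT.le,
    show (1 : ℂ) + T * I = ((1 : ℝ) : ℂ) + T * I by push_cast; ring] at hG
  rw [e, norm_mul, norm_Gamma_conj_line, norm_div, norm_real,
    Real.norm_of_nonneg Real.pi_pos.le] at h
  have hp : 0 < Real.pi * T := mul_pos Real.pi_pos hT
  have h1 := norm_sin_le (Real.pi * (T * I))
  have h2 := norm_sin_pos_of_im (z := Real.pi * (T * I)) (by rw [him]; exact hp.ne')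
  rw [him, abs_of_pos hp] at h1
  have h3 : ‖Gamma ((1 : ℝ) + T * I)‖ ^ 2 = T * (Real.pi / ‖sin (Real.pi * (T * I))‖) := by
    rw [← h]; nth_rw 1 [sq, hG]; ring
  rw [h3, Real.exp_neg, ← div_eq_mul_inv, mul_comm Real.pi T, mul_div_assoc,
    mul_comm T Real.pi]
  gcongr

/-- The lower bound `|Γ(3/4 + iT)|^4 ≫ T exp(-2πT)`, of the order given by Stirling. It follows
from the reflection formula on the lines `re s = 1/2` and `re s = 1` and the limit of
`GammaSeq_ineq`. -/
theorem norm_Gamma_three_quarters : ∃ c : ℝ, 0 < c ∧ ∀ T : ℝ, 0 < T →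
    c * T * Real.exp (-(2 * Real.pi * T)) ≤ ‖Gamma ((3 / 4 : ℝ) + T * I)‖ ^ 4 := by
  have hreal : ∀ σ : ℝ, 0 < σ → 0 < ‖Gamma ((σ : ℝ) + (0 : ℝ) * I)‖ := by
    intro σ hσ
    rw [norm_pos_iff]
    apply Complex.Gamma_ne_zero_of_re_pos
    simpa using hσ
  have a1 := hreal (1 / 2) (by norm_num)
  have a2 := hreal 1 (by norm_num)
  have a3 := hreal (3 / 4) (by norm_num)
  set D := ‖Gamma ((1 / 2 : ℝ) + (0 : ℝ) * I)‖ * ‖Gamma ((1 : ℝ) + (0 : ℝ) * I)‖ with hD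
  set E := ‖Gamma ((3 / 4 : ℝ) + (0 : ℝ) * I)‖ ^ 2 with hE
  have hDp : 0 < D := by positivity
  have hEp : 0 < E := by positivity
  refine ⟨Real.pi ^ 2 * E ^ 2 / D ^ 2, by positivity, fun T hT => ?_⟩
  have lim : ∀ σ t : ℝ, Tendsto (fun n => ‖GammaSeq ((σ : ℝ) + (t : ℝ) * I) n‖) atTop
      (𝓝 ‖Gamma ((σ : ℝ) + (t : ℝ) * I)‖) := fun σ t => (GammaSeq_tendsto_Gamma _).norm
  have hle := le_of_tendsto_of_tendsto
    ((((lim (1 / 2) T).mul (lim 1 T)).mul ((lim (3 / 4) 0).pow 2)).pow 2)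
    ((((lim (3 / 4) T).pow 2).mul ((lim (1 / 2) 0).mul (lim 1 0))).pow 2)
    (by filter_upwards [eventually_gt_atTop 0] with n hn using GammaSeq_ineq T hn)
  rw [← hD, ← hE] at hle
  have h1 := norm_Gamma_half hT
  have h2 := norm_Gamma_one hT
  have h3 : Real.pi ^ 2 * T * Real.exp (-(2 * Real.pi * T)) ≤
      ‖Gamma ((1 / 2 : ℝ) + T * I)‖ ^ 2 * ‖Gamma ((1 : ℝ) + T * I)‖ ^ 2 := by
    have := mul_le_mul h1 h2 (by have := Real.pi_pos; positivity) (by positivity)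
    refine le_trans (le_of_eq ?_) this
    rw [show -(2 * Real.pi * T) = -(Real.pi * T) + -(Real.pi * T) by ring, Real.exp_add]
    ring
  rw [show Real.pi ^ 2 * E ^ 2 / D ^ 2 * T * Real.exp (-(2 * Real.pi * T)) =
    (Real.pi ^ 2 * T * Real.exp (-(2 * Real.pi * T))) * E ^ 2 / D ^ 2 by ring,
    div_le_iff₀ (by positivity)]
  calc _ ≤ (‖Gamma ((1 / 2 : ℝ) + T * I)‖ ^ 2 * ‖Gamma ((1 : ℝ) + T * I)‖ ^ 2) * E ^ 2 := by gcongr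
    _ = (‖Gamma ((1 / 2 : ℝ) + T * I)‖ * ‖Gamma ((1 : ℝ) + T * I)‖ * E) ^ 2 := by ring
    _ ≤ _ := hle
    _ = _ := by ring

theorem norm_cos_ge (z : ℂ) : (Real.exp z.im - Real.exp (-z.im)) / 2 ≤ ‖cos z‖ := by
  rw [Complex.cos, norm_div]
  have h1 : ‖cexp (-z * I)‖ = Real.exp z.im := by
    rw [norm_exp]; simp
  have h2 : ‖cexp (z * I)‖ = Real.exp (-z.im) := by
    rw [norm_exp]; simp
  have := norm_sub_le_norm_add (cexp (-z * I)) (cexp (z * I))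
  rw [h1, h2, add_comm] at this
  rw [Complex.norm_ofNat]
  linarith

/-- The functional equation at `s = 3/4 + iT` gives `|ζ(1/4 + iT)| ≫ T^(1/4) |ζ(3/4 + iT)|`; the
fourth powers avoid fractional exponents. The decay of `Γ(s)` cancels the growth of
`cos(πs/2)`. -/
theorem zeta_ratio : ∃ c : ℝ, 0 < c ∧ ∀ T : ℝ, 1 ≤ T →
    c * T * ‖riemannZeta ((3 / 4 : ℝ) + T * I)‖ ^ 4 ≤ ‖riemannZeta ((1 / 4 : ℝ) + T * I)‖ ^ 4 := by
  obtain ⟨c, hc, hG⟩ := norm_Gamma_three_quarters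
  have hpi := Real.pi_pos
  set q : ℝ := ‖(2 * (2 * Real.pi : ℂ) ^ (-((3 / 4 : ℝ) : ℂ)))‖ with hq
  have hqpos : 0 < q := by
    rw [hq, norm_pos_iff]
    simp [hpi.ne']
  refine ⟨q ^ 4 * c / 256, by positivity, fun T hT => ?_⟩
  have hT0 : 0 < T := by linarith
  set s : ℂ := (3 / 4 : ℝ) + T * I with hs
  have hsim : s.im = T := by simp [hs]
  have hfe := congrArg norm (riemannZeta_one_sub (s := s)
    (fun n h => by
      have := congrArg im h
      rw [hsim] at this; simp at this; linarith)
    (fun h => by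
      have := congrArg im h
      rw [hsim] at this; simp at this; linarith))
  have e1 : ‖riemannZeta (1 - s)‖ = ‖riemannZeta ((1 / 4 : ℝ) + T * I)‖ := by
    rw [← norm_conj, ← riemannZeta_conj]
    congr 2
    rw [hs, map_sub, map_add, map_mul, map_one, conj_ofReal, conj_ofReal, conj_I]
    push_cast
    ring
  have e2 : ‖(2 * Real.pi : ℂ) ^ (-s)‖ = ‖(2 * Real.pi : ℂ) ^ (-((3 / 4 : ℝ) : ℂ))‖ := by
    have : (2 * Real.pi : ℂ) = ((2 * Real.pi : ℝ) : ℂ) := by push_cast; rfl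
    rw [this, norm_cpow_eq_rpow_re_of_pos (by positivity),
      norm_cpow_eq_rpow_re_of_pos (by positivity)]
    congr 1; simp [hs]
  rw [e1, norm_mul, norm_mul, norm_mul, norm_mul, e2, ← norm_mul, ← hq] at hfe
  have hcos : Real.exp (Real.pi * T / 2) / 4 ≤ ‖cos (Real.pi * s / 2)‖ := by
    have h := norm_cos_ge (Real.pi * s / 2)
    have him : (Real.pi * s / 2).im = Real.pi * T / 2 := by
      rw [show (Real.pi * s / 2 : ℂ) = ((Real.pi / 2 : ℝ) : ℂ) * s by push_cast; ring,
        im_ofReal_mul, hsim]; ring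
    rw [him] at h
    have h1 : Real.exp (-(Real.pi * T / 2)) ≤ 1 := Real.exp_le_one_iff.mpr (by
      have : 0 < Real.pi * T := by positivity
      linarith)
    have h2 : 2 ≤ Real.exp (Real.pi * T / 2) := by
      have := Real.add_one_le_exp (Real.pi * T / 2)
      nlinarith [Real.pi_gt_three]
    linarith
  have hcos4 : Real.exp (2 * Real.pi * T) / 256 ≤ ‖cos (Real.pi * s / 2)‖ ^ 4 := by
    have := pow_le_pow_left₀ (by positivity) hcos 4
    refine le_trans (le_of_eq ?_) this
    rw [div_pow, ← Real.exp_nat_mul]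
    norm_num; ring_nf
  rw [hfe, mul_pow, mul_pow, mul_pow]
  have hmul := mul_le_mul (hG T hT0) hcos4 (by positivity) (by positivity)
  have e3 : c * T * Real.exp (-(2 * Real.pi * T)) * (Real.exp (2 * Real.pi * T) / 256) =
      c * T / 256 := by
    rw [Real.exp_neg]; field_simp
  rw [e3] at hmul
  calc _ = q ^ 4 * (c * T / 256) * ‖riemannZeta s‖ ^ 4 := by ring
    _ ≤ q ^ 4 * (‖Gamma s‖ ^ 4 * ‖cos (Real.pi * s / 2)‖ ^ 4) * ‖riemannZeta s‖ ^ 4 := by gcongr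
    _ = _ := by ring

/-! ### Gaps between ordinates of zeros -/

/-- Littlewood's theorem: the gaps between the ordinates of consecutive zeros of `ζ` tend to
zero. Unconditional. -/
theorem gap {ε : ℝ} (hε : 0 < ε) : ∃ T0 : ℝ, ∀ T ≥ T0, ∃ ρ : ℂ,
    riemannZeta ρ = 0 ∧ 0 < ρ.re ∧ ρ.re < 1 ∧ |ρ.im - T| < ε := by
  obtain ⟨C, hC, hzC⟩ := zeta_bound
  obtain ⟨M, hM⟩ := zeta_bound_right
  obtain ⟨c, hc, hratio⟩ := zeta_ratio
  -- `w ↦ 2 + iT + κ log (1 - w)` maps the unit disc into `|im s - T| < 2κ ≤ ε`, with its centre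
  -- going to `2 + iT` and the real point `P a` to `2 - a + iT`; the disc of radius `P a` lands in
  -- `re s > 2 - a`. The values of `a` used below are `15/8` (the whole domain, `re s > 1/8`),
  -- `1/2` (the part `re s > 3/2`, where `ζ` is bounded), and `7/4`, `5/4` (the points `1/4 + iT`
  -- and `3/4 + iT`).
  set κ : ℝ := min ε 1 / 2 with hκ
  have hκ0 : 0 < κ := by positivity
  have hκε : 2 * κ ≤ ε := by have := min_le_left ε 1; linarith
  have hκ1 : 2 * κ ≤ 1 := by have := min_le_right ε 1; linarith
  set P : ℝ → ℝ := fun a => 1 - Real.exp (-a / κ) with hP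
  have hPmono : ∀ {a b : ℝ}, a < b → P a < P b := by
    intro a b hab
    have : -b / κ < -a / κ := by gcongr
    have := Real.exp_lt_exp.mpr this
    simp only [hP]; linarith
  have hP0 : P 0 = 0 := by simp [hP]
  have hP1 : ∀ a, P a < 1 := fun a => by
    have := Real.exp_pos (-a / κ)
    simp only [hP]; linarith
  have hPpos : ∀ {a : ℝ}, 0 < a → 0 < P a := fun ha => hP0 ▸ hPmono ha
  set φ : ℝ → ℂ → ℂ := fun T w => 2 + T * I + κ * log (1 - w) with hφ
  have hφre : ∀ T w, (φ T w).re = 2 + κ * Real.log ‖1 - w‖ := by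
    intro T w; simp [hφ, log_re]
  have hφim : ∀ T w, (φ T w).im = T + κ * (1 - w).arg := by
    intro T w; simp [hφ, log_im]
  have hre_ge : ∀ {a : ℝ} (T : ℝ) {w : ℂ}, ‖w‖ < P a → 2 - a < (φ T w).re := by
    intro a T w hw
    have h1 : Real.exp (-a / κ) < ‖1 - w‖ := by
      have := norm_sub_norm_le 1 w
      rw [norm_one] at this
      simp only [hP] at hw; linarith
    have h2 := Real.log_lt_log (Real.exp_pos _) h1
    rw [Real.log_exp, div_lt_iff₀ hκ0] at h2
    rw [hφre]; linarith
  have hre_le : ∀ (T : ℝ) {w : ℂ}, ‖w‖ < 1 → (φ T w).re ≤ 3 := by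
    intro T w hw
    have h1 : ‖1 - w‖ ≤ 2 := by
      have := norm_sub_le 1 w
      rw [norm_one] at this; linarith
    have h0 : 0 < ‖1 - w‖ := by
      have := norm_sub_norm_le 1 w
      rw [norm_one] at this; linarith
    have h2 := Real.log_le_sub_one_of_pos h0
    rw [hφre]
    nlinarith
  have hre1 : ∀ {w : ℂ}, ‖w‖ < 1 → 0 < (1 - w).re := by
    intro w hw
    have := (le_abs_self w.re).trans (abs_re_le_norm w)
    simp; linarith
  have him : ∀ (T : ℝ) {w : ℂ}, ‖w‖ < 1 → |(φ T w).im - T| < 2 * κ := by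
    intro T w hw
    rw [hφim, add_sub_cancel_left, abs_mul, abs_of_pos hκ0, mul_comm]
    have h1 := abs_arg_le_pi_div_two_iff.mpr (hre1 hw).le
    have h2 := Real.pi_lt_four
    have : |(1 - w).arg| < 2 := by linarith
    gcongr
  have hφP : ∀ (T a : ℝ), φ T (P a) = ((2 - a : ℝ) : ℂ) + T * I := by
    intro T a
    have : (1 : ℂ) - (P a : ℂ) = ((Real.exp (-a / κ) : ℝ) : ℂ) := by simp [hP]
    simp only [hφ]
    rw [this, ← ofReal_log (Real.exp_pos _).le, Real.log_exp, ← ofReal_mul,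
      mul_div_cancel₀ _ hκ0.ne']
    push_cast; ring
  set K : ℝ := |M| + 6 with hK
  have hK0 : 0 < K := by positivity
  have hpt : ∀ a : ℝ, 0 < a → a < 15 / 8 → ∀ᶠ L : ℝ in atTop, ∀ g : ℂ → ℂ,
      DifferentiableOn ℂ g (ball 0 (P (15 / 8))) →
      (∀ z ∈ ball (0 : ℂ) (P (15 / 8)), (g z).re ≤ L) →
      (∀ z ∈ ball (0 : ℂ) (P (1 / 2)), (g z).re ≤ K) →
      ‖g 0‖ ≤ K → ‖g (P a)‖ ≤ 1 / 16 * L := by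
    intro a ha ha'
    have hpa := hPpos ha
    -- Any `η < 1/8` would do: four times the sum of two errors `η L` has to stay below `L`,
    -- and `η = 1/16` makes it `L / 2`.
    refine three_circles (hPpos (by norm_num)) (hPmono (by norm_num)) hK0 (by norm_num) ?_ ?_
    · rw [norm_real, Real.norm_of_nonneg hpa.le]; exact hPmono ha'
    · exact_mod_cast hpa.ne'
  have hLlim : Tendsto (fun T : ℝ => Real.log (C * (T + 4))) atTop atTop :=
    Real.tendsto_log_atTop.comp
      ((tendsto_atTop_add_const_right _ _ tendsto_id).const_mul_atTop hC)
  have hev := (hLlim.eventually (hpt (7 / 4) (by norm_num) (by norm_num))).and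
    (hLlim.eventually (hpt (5 / 4) (by norm_num) (by norm_num)))
  obtain ⟨T1, hT1⟩ := eventually_atTop.mp hev
  refine ⟨max T1 (max 4 (2 * C / c ^ 2 + 1)), fun T hT => ?_⟩
  have hTT1 : T1 ≤ T := (le_max_left _ _).trans hT
  have hT4 : 4 ≤ T := ((le_max_left _ _).trans (le_max_right _ _)).trans hT
  have hTc : 2 * C / c ^ 2 + 1 ≤ T := ((le_max_right _ _).trans (le_max_right _ _)).trans hT
  obtain ⟨hg1, hg2⟩ := hT1 T hTT1
  by_contra hno
  push Not at hno
  set R : ℝ := P (15 / 8) with hR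
  have hR0 : 0 < R := hPpos (by norm_num)
  have hR1 : R < 1 := hP1 _
  have hne : ∀ z ∈ ball (0 : ℂ) R, riemannZeta (φ T z) ≠ 0 := by
    intro z hz h0
    have hz' : ‖z‖ < R := by simpa using hz
    have h1 := hre_ge T hz'
    rcases lt_or_ge (φ T z).re 1 with h2 | h2
    · have h3 := hno _ h0 (by linarith) h2
      have h4 := him T (hz'.trans hR1)
      linarith
    · exact riemannZeta_ne_zero_of_one_le_re h2 h0
  have himge : ∀ z ∈ ball (0 : ℂ) R, 1 ≤ (φ T z).im ∧ (φ T z).im ≤ T + 1 := by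
    intro z hz
    have hz' : ‖z‖ < R := by simpa using hz
    have h4 := abs_lt.mp (him T (hz'.trans hR1))
    constructor <;> linarith [h4.1, h4.2]
  have hdφ : DifferentiableOn ℂ (fun z => riemannZeta (φ T z)) (ball 0 R) := by
    intro z hz
    have hz' : ‖z‖ < R := by simpa using hz
    have hne1 : φ T z ≠ 1 := by
      intro h
      have := (himge z hz).1
      rw [h] at this; simp at this; linarith
    apply DifferentiableAt.differentiableWithinAt
    refine (differentiableAt_riemannZeta hne1).comp z ?_
    have hlog : DifferentiableAt ℂ (fun w : ℂ => log (1 - w)) z :=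
      DifferentiableAt.clog (by fun_prop) (Or.inl (hre1 (hz'.trans hR1)))
    exact (hlog.const_mul _).const_add _
  obtain ⟨g, hgd, hge, hg0⟩ := exists_log_on_ball hR0 hdφ hne
  have hexp : ∀ z ∈ ball (0 : ℂ) R, Real.exp (g z).re = ‖riemannZeta (φ T z)‖ := by
    intro z hz; rw [← norm_exp, hge z hz]
  have hCT : 0 < C * (T + 4) := by positivity
  have hgL : ∀ z ∈ ball (0 : ℂ) R, (g z).re ≤ Real.log (C * (T + 4)) := by
    intro z hz
    have hz' : ‖z‖ < R := by simpa using hz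
    rw [Real.le_log_iff_exp_le hCT, hexp z hz]
    have h1 := hre_ge T hz'
    have h2 := himge z hz
    have h3 := hre_le T (hz'.trans hR1)
    refine (hzC _ (by linarith) h2.1).trans ?_
    gcongr
    refine (norm_le_abs_re_add_abs_im _).trans ?_
    rw [abs_of_pos (by linarith), abs_of_pos (by linarith)]
    linarith
  have hgK : ∀ z ∈ ball (0 : ℂ) (P (1 / 2)), (g z).re ≤ K := by
    intro z hz
    have hzR : z ∈ ball (0 : ℂ) R := ball_subset_ball (hPmono (by norm_num)).le hz
    have hz' : ‖z‖ < P (1 / 2) := by simpa using hz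
    have h1 := hre_ge T hz'
    have h2 := hM (φ T z) (by linarith)
    rw [← hexp z hzR] at h2
    linarith [Real.add_one_le_exp (g z).re, le_abs_self M]
  have hgz : ‖g 0‖ ≤ K := by
    rw [hg0]
    have : φ T 0 = 2 + T * I := by simp [hφ]
    rw [this]
    linarith [norm_log_zeta_two T, abs_nonneg M]
  have b1 := (abs_re_le_norm _).trans (hg1 g hgd hgL hgK hgz)
  have b2 := (abs_re_le_norm _).trans (hg2 g hgd hgL hgK hgz)
  have hmem : ∀ a : ℝ, 0 < a → a < 15 / 8 → (P a : ℂ) ∈ ball (0 : ℂ) R := by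
    intro a ha ha'
    rw [mem_ball_zero_iff, norm_real, Real.norm_of_nonneg (hPpos ha).le]
    exact hPmono ha'
  have hr := hratio T (by linarith)
  have e1 := hexp _ (hmem (7 / 4) (by norm_num) (by norm_num))
  have e2 := hexp _ (hmem (5 / 4) (by norm_num) (by norm_num))
  rw [hφP, show (2 - 7 / 4 : ℝ) = 1 / 4 by norm_num] at e1
  rw [hφP, show (2 - 5 / 4 : ℝ) = 3 / 4 by norm_num] at e2
  rw [← e1, ← e2, ← Real.exp_nat_mul, ← Real.exp_nat_mul, ← le_div_iff₀ (Real.exp_pos _),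
    ← Real.exp_sub] at hr
  -- `c T ≤ exp (4 re g(P (7/4)) - 4 re g(P (5/4)))`, and each real part is at most `L / 16` in
  -- absolute value, where `exp L = C (T + 4)`; hence `T ≪ T^(1/2)`.
  have hfin : c * T ≤ Real.exp (Real.log (C * (T + 4)) / 2) := by
    refine hr.trans (Real.exp_le_exp.mpr ?_)
    have := (abs_le.mp b1).2
    have := (abs_le.mp b2).1
    push_cast
    linarith
  have hsq : (c * T) ^ 2 ≤ C * (T + 4) := by
    have := pow_le_pow_left₀ (by positivity) hfin 2
    rw [← Real.exp_nat_mul, Nat.cast_ofNat, mul_div_cancel₀ _ (two_ne_zero), Real.exp_log hCT]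
      at this
    exact this
  -- Since `T ≥ 4`, the right side of `hsq` is at most `2 C T`.
  have h2 : 2 * C < c ^ 2 * T := by
    rw [← div_lt_iff₀' (by positivity)]; linarith
  nlinarith

/-- under RH, sums `ρ + ρ'` of two nontrivial zeros of `ζ` are dense on the
vertical line `Re s = 1`. -/
theorem sums_of_zeta_zeros_dense_on_line
    (RH : ∀ ρ : ℂ, riemannZeta ρ = 0 → 0 < ρ.re → ρ.re < 1 → ρ.re = 1 / 2) :
    ∀ s : ℂ, s.re = 1 →
      s ∈ closure {z : ℂ | ∃ ρ ρ' : ℂ,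
        riemannZeta ρ = 0 ∧ 0 < ρ.re ∧ ρ.re < 1 ∧
        riemannZeta ρ' = 0 ∧ 0 < ρ'.re ∧ ρ'.re < 1 ∧ z = ρ + ρ'} := by
  intro s hs
  rw [Metric.mem_closure_iff]
  intro ε hε
  obtain ⟨T0, hT0⟩ := gap hε
  -- A high zero `ρ`, and a second one within `ε` of height `im ρ + im s`; the required sum is
  -- `conj ρ + ρ'`.
  obtain ⟨ρ, hρ, hρ0, hρ1, hρT⟩ := hT0 (max T0 (T0 + ε - s.im)) (le_max_left _ _)
  obtain ⟨ρ', hρ', hρ'0, hρ'1, hρ'T⟩ := hT0 (ρ.im + s.im) (by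
    have := le_max_right T0 (T0 + ε - s.im)
    linarith [(abs_lt.mp hρT).1])
  refine ⟨(starRingEnd ℂ) ρ + ρ', ⟨_, ρ', ?_, ?_, ?_, hρ', hρ'0, hρ'1, rfl⟩, ?_⟩
  · rw [riemannZeta_conj, hρ, map_zero]
  · simpa using hρ0
  · simpa using hρ1
  · have e1 := RH ρ hρ hρ0 hρ1
    have e2 := RH ρ' hρ' hρ'0 hρ'1
    have hd : s - ((starRingEnd ℂ) ρ + ρ') = ((-(ρ'.im - (ρ.im + s.im)) : ℝ) : ℂ) * I := by
      apply Complex.ext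
      · simp [hs, e1, e2]; norm_num
      · simp; ring
    rw [dist_eq_norm, hd, norm_mul, norm_I, mul_one, norm_real, norm_neg, Real.norm_eq_abs]
    exact hρ'T
end
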